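/- arXiv:math/0012217 — 6 statements merged into one kernel-verified Lean document; each statement's English description precedes it below -/
import Mathlib

section
/- Let G be a finite non-abelian simple group, let H be a non-abelian simple subgroup of G, and suppose there is a group homomorphism j : Aut(H) → Aut(G) such that j(c_h) = c_{h} for every h ∈ H, where c_h denotes conjugation by h (as an automorphism of H on the left side and as an automorphism of G on the right side, h being regarded as an element of G). Then every automorphism α of H extends to an automorphism of G; precisely, for every α ∈ Aut(H) and every h ∈ H one has j(α)(h) = α(h) (where on the left h and on the right α(h) are regarded as elements of G). -/
/-!
Conjugation by `α h` is the conjugate by `α` of conjugation by `h`. Applying `j` to this identity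
in `Aut(H)` and comparing with the same identity for `j α` in `Aut(G)`, one sees that `j α h` and
`α h` induce the same inner automorphism of `G`. When `G` has trivial center, an element is
determined by its inner automorphism.
-/

section

variable {G H : Type*} [Group G] [Group H]

theorem conj_mulAut_apply (α : MulAut G) (g : G) :
    MulAut.conj (α g) = α * MulAut.conj g * α⁻¹ := by
  ext x
  simp

theorem ker_mulAut_conj : (MulAut.conj : G →* MulAut G).ker = Subgroup.center G := by
  ext g
  simp only [MonoidHom.mem_ker, MulEquiv.ext_iff, MulAut.conj_apply, MulAut.one_apply,
    mul_inv_eq_iff_eq_mul, Subgroup.mem_center_iff]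
  exact forall_congr' fun _ ↦ eq_comm

theorem mulAut_conj_injective_iff :
    Function.Injective (MulAut.conj : G →* MulAut G) ↔ Subgroup.center G = ⊥ := by
  rw [← MonoidHom.ker_eq_bot_iff, ker_mulAut_conj]

theorem center_eq_bot_of_not_isMulCommutative [IsSimpleGroup G]
    (hG : ¬ IsMulCommutative G) : Subgroup.center G = ⊥ :=
  (inferInstance : (Subgroup.center G).Normal).eq_bot_or_eq_top.resolve_right
    fun center_eq_top ↦ hG (Subgroup.center_eq_top_iff.mp center_eq_top)

theorem conj_apply_map_eq_conj_map_apply {φ : H →* G} {j : MulAut H →* MulAut G}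
    (hj : ∀ h, j (MulAut.conj h) = MulAut.conj (φ h)) (α : MulAut H) (h : H) :
    MulAut.conj (j α (φ h)) = MulAut.conj (φ (α h)) :=
  calc
    MulAut.conj (j α (φ h)) = j α * MulAut.conj (φ h) * (j α)⁻¹ := conj_mulAut_apply _ _
    _ = j (α * MulAut.conj h * α⁻¹) := by rw [← hj, map_mul, map_mul, map_inv]
    _ = j (MulAut.conj (α h)) := by rw [conj_mulAut_apply]
    _ = MulAut.conj (φ (α h)) := hj _

theorem statement0_general (hG : Subgroup.center G = ⊥) {φ : H →* G} {j : MulAut H →* MulAut G}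
    (hj : ∀ h, j (MulAut.conj h) = MulAut.conj (φ h)) (α : MulAut H) (h : H) :
    j α (φ h) = φ (α h) :=
  mulAut_conj_injective_iff.mpr hG (conj_apply_map_eq_conj_map_apply hj α h)

end

/-- If `G` is a finite non-abelian simple group, `H` a non-abelian simple
subgroup, and `j : Aut(H) →* Aut(G)` satisfies `j(c_h) = c_h` for all `h ∈ H`, then
every automorphism `α` of `H` extends to `G`: `j(α)(h) = α(h)` for all `h ∈ H`. -/
theorem statement0 (G : Type*) [Group G] [Finite G] [IsSimpleGroup G]
    (hG : ¬ ∀ a b : G, a * b = b * a)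
    (H : Subgroup G) [IsSimpleGroup H]
    (hH : ¬ ∀ a b : H, a * b = b * a)
    (j : MulAut H →* MulAut G)
    (hj : ∀ h : H, j (MulAut.conj h) = MulAut.conj (h : G)) :
    ∀ (α : MulAut H) (h : H), j α (h : G) = ((α h : H) : G) :=
  statement0_general (φ := H.subtype)
    (center_eq_bot_of_not_isMulCommutative (mt isMulCommutative_iff.mp hG)) hj
end

section
/- Let H be a non-abelian simple subgroup of a finite non-abelian simple group G and let i : H ↪ G be the inclusion. Then i is a localization if and only if the following three conditions hold: (1) there exists an injective group homomorphism j : Aut(H) → Aut(G) such that j(c_h) = c_h for every h ∈ H; (2) for every subgroup H' of G that is isomorphic (as a group) to H, there exists an automorphism α of G with α(H) = H'; (3) the only automorphism of G fixing every element of H is the identity. -/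
/-- A group homomorphism `φ : H →* G` is a localization if precomposition with `φ`
induces a bijection `Hom(G,G) ≃ Hom(H,G)`. -/
def IsLocalizationHom {H G : Type*} [Group H] [Group G] (φ : H →* G) : Prop :=
  Function.Bijective fun ψ : G →* G => ψ.comp φ

/-!
Endomorphisms of a simple group are trivial or injective, so when injective endomorphisms are
surjective they are trivial or automorphisms. If `φ : H → G` is a localization, the unique extension
of `φ ∘ a`, for `a ∈ Aut H`, is functorial in `a`, which yields `Aut H → Aut G`; extending an
embedding of `H` with image `H'` gives an automorphism of `G` that moves `H` to `H'`.

Conversely, given an embedding `f : H → G`, choose `α ∈ Aut G` carrying `H` to `f(H)`; then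
`f = α ∘ b` on `H` for some `b ∈ Aut H`. As `j` is compatible with inner automorphisms and `G` is
centerless, `j b` restricts to `b` on `H`, so `α ∘ j b` extends `f`.
-/

theorem monoidHom_ne_one_of_injective {A B : Type*} [Group A] [Group B] [Nontrivial A] {f : A →* B}
    (hf : Function.Injective f) : f ≠ 1 := by
  rintro rfl
  obtain ⟨a, ha⟩ := exists_ne (1 : A)
  exact ha (hf rfl)

section TrivialOrInjective

variable {A B : Type*} [Group A] [Group B] [IsSimpleGroup A]

theorem monoidHom_injective_of_ne_one {f : A →* B} (hf : f ≠ 1) : Function.Injective f :=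
  f.ker_eq_bot_iff.mp <| f.normal_ker.eq_bot_or_eq_top.resolve_right fun hker =>
    hf (f.ker_eq_top_iff.mp hker)

theorem monoidHom_comp_eq_one_iff {C : Type*} [Group C] {g : C →* A} (hg : g ≠ 1) {f : A →* B} :
    f.comp g = 1 ↔ f = 1 := by
  refine ⟨fun hfg => ?_, fun hf => by rw [hf, MonoidHom.one_comp]⟩
  by_contra hf
  have hf_inj := monoidHom_injective_of_ne_one hf
  exact hg ((MonoidHom.cancel_left hf_inj).mp (by rw [hfg, MonoidHom.comp_one]))

theorem conj_injective_of_not_commutative (hA : ¬ ∀ a b : A, a * b = b * a) :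
    Function.Injective (MulAut.conj : A →* MulAut A) := by
  refine monoidHom_injective_of_ne_one fun hconj => hA fun a b => ?_
  have hab : MulAut.conj a b = b := by rw [hconj, MonoidHom.one_apply, MulAut.one_apply]
  exact mul_inv_eq_iff_eq_mul.mp hab

end TrivialOrInjective

/-- A group is co-Hopfian if its injective endomorphisms are surjective; an endomorphism of a
co-Hopfian simple group is then trivial or an automorphism. -/
def IsCoHopfian (G : Type*) [Group G] : Prop :=
  ∀ f : G →* G, Function.Injective f → Function.Surjective f

theorem isCoHopfian_of_finite (G : Type*) [Group G] [Finite G] : IsCoHopfian G :=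
  fun _ => Finite.surjective_of_injective

theorem IsCoHopfian.exists_mulAut_eq {G : Type*} [Group G] [IsSimpleGroup G] (hG : IsCoHopfian G)
    {ψ : G →* G} (hψ : ψ ≠ 1) : ∃ α : MulAut G, α.toMonoidHom = ψ :=
  have hinj := monoidHom_injective_of_ne_one hψ
  ⟨MulEquiv.ofBijective ψ ⟨hinj, hG ψ hinj⟩, rfl⟩

section Automorphisms

variable {H G : Type*} [Group H] [Group G]

theorem conj_mulAut_apply_s2 (a : MulAut H) (h : H) :
    MulAut.conj (a h) = a * MulAut.conj h * a⁻¹ := by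
  ext x
  simp

theorem mulAut_apply_of_map_conj (hconj : Function.Injective (MulAut.conj : G →* MulAut G))
    {φ : H →* G} {j : MulAut H →* MulAut G}
    (hj : ∀ h, j (MulAut.conj h) = MulAut.conj (φ h)) (a : MulAut H) (h : H) :
    j a (φ h) = φ (a h) := by
  apply hconj
  calc MulAut.conj (j a (φ h)) = j a * MulAut.conj (φ h) * (j a)⁻¹ := conj_mulAut_apply_s2 _ _
    _ = j (a * MulAut.conj h * a⁻¹) := by rw [map_mul, map_mul, map_inv, hj]
    _ = MulAut.conj (φ (a h)) := by rw [← conj_mulAut_apply_s2, hj]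

theorem exists_mulAut_comp_eq_of_range_eq {f g : H →* G} (hf : Function.Injective f)
    (hg : Function.Injective g) (hfg : f.range = g.range) :
    ∃ a : MulAut H, ∀ h, f (a h) = g h := by
  let a : MulAut H := (MonoidHom.ofInjective hg).trans <|
    (MulEquiv.subgroupCongr hfg.symm).trans (MonoidHom.ofInjective hf).symm
  exact ⟨a, fun h => MonoidHom.apply_ofInjective_symm hf _⟩

end Automorphisms

namespace IsLocalizationHom

variable {H G : Type*} [Group H] [Group G] {φ : H →* G}

theorem hom_ext (hφ : IsLocalizationHom φ) {ψ χ : G →* G} (h : ∀ x, ψ (φ x) = χ (φ x)) : ψ = χ :=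
  hφ.injective (MonoidHom.ext h)

theorem mulAut_ext (hφ : IsLocalizationHom φ) {α β : MulAut G} (h : ∀ x, α (φ x) = β (φ x)) :
    α = β :=
  MulEquiv.toMonoidHom_injective (hφ.hom_ext h)

/-- The unique endomorphism of `G` that extends a homomorphism `f : H →* G` along a localization
`H →* G`. -/
noncomputable def extend (hφ : IsLocalizationHom φ) (f : H →* G) : G →* G :=
  (hφ.surjective f).choose

theorem extend_apply (hφ : IsLocalizationHom φ) (f : H →* G) (h : H) :
    hφ.extend f (φ h) = f h :=
  DFunLike.congr_fun (hφ.surjective f).choose_spec h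

theorem extend_comp_extend (hφ : IsLocalizationHom φ) (a b : H →* H) :
    (hφ.extend (φ.comp a)).comp (hφ.extend (φ.comp b)) = hφ.extend (φ.comp (a.comp b)) :=
  hφ.hom_ext fun x => by simp only [MonoidHom.comp_apply, extend_apply]

theorem extend_self (hφ : IsLocalizationHom φ) : hφ.extend φ = MonoidHom.id G :=
  hφ.hom_ext fun x => hφ.extend_apply φ x

/-- The homomorphism `Aut H → Aut G` induced by a localization `φ : H →* G`, sending `a` to the
extension of `φ ∘ a`. -/
noncomputable def mapAut (hφ : IsLocalizationHom φ) : MulAut H →* MulAut G :=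
  MonoidHom.mk'
    (fun a => MonoidHom.toMulEquiv (hφ.extend (φ.comp a.toMonoidHom))
      (hφ.extend (φ.comp a.symm.toMonoidHom))
      (by simp [extend_comp_extend, extend_self])
      (by simp [extend_comp_extend, extend_self]))
    fun a b => MulEquiv.toMonoidHom_injective
      (hφ.extend_comp_extend a.toMonoidHom b.toMonoidHom).symm

theorem mapAut_apply (hφ : IsLocalizationHom φ) (a : MulAut H) (h : H) :
    hφ.mapAut a (φ h) = φ (a h) :=
  hφ.extend_apply _ h

theorem mapAut_conj (hφ : IsLocalizationHom φ) (h : H) :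
    hφ.mapAut (MulAut.conj h) = MulAut.conj (φ h) :=
  hφ.mulAut_ext fun x => by simp [mapAut_apply]

theorem mapAut_injective (hφ : IsLocalizationHom φ) (hinj : Function.Injective φ) :
    Function.Injective hφ.mapAut := fun a b hab => MulEquiv.ext fun x => hinj <| by
  rw [← hφ.mapAut_apply, hab, hφ.mapAut_apply]

theorem exists_mulAut_extending [IsSimpleGroup G] (hφ : IsLocalizationHom φ) (hG : IsCoHopfian G)
    {f : H →* G} (hf : f ≠ 1) : ∃ α : MulAut G, α.toMonoidHom.comp φ = f := by
  obtain ⟨ψ, rfl⟩ := hφ.surjective f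
  have hψ : ψ ≠ 1 := fun h => hf (by simp only [h, MonoidHom.one_comp])
  obtain ⟨α, rfl⟩ := hG.exists_mulAut_eq hψ
  exact ⟨α, rfl⟩

theorem exists_mulAut_map_range_eq [IsSimpleGroup G] [Nontrivial H] (hφ : IsLocalizationHom φ)
    (hG : IsCoHopfian G) {H' : Subgroup G} (e : H ≃* H') :
    ∃ α : MulAut G, φ.range.map α.toMonoidHom = H' := by
  have hf : H'.subtype.comp e.toMonoidHom ≠ 1 :=
    monoidHom_ne_one_of_injective (H'.subtype_injective.comp e.injective)
  obtain ⟨α, hα⟩ := hφ.exists_mulAut_extending hG hf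
  refine ⟨α, ?_⟩
  rw [MonoidHom.map_range, hα, MonoidHom.range_comp,
    MonoidHom.range_eq_top.mpr e.surjective, ← MonoidHom.range_eq_map, H'.range_subtype]

end IsLocalizationHom

section Precomposition

variable {H G : Type*} [Group H] [Group G] {φ : H →* G}

theorem precomp_injective_of_mulAut_fixing_eq_one [IsSimpleGroup G] (hG : IsCoHopfian G)
    (hφ : φ ≠ 1) (hfix : ∀ β : MulAut G, (∀ h, β (φ h) = φ h) → β = 1) :
    Function.Injective fun ψ : G →* G => ψ.comp φ := by
  intro ψ χ (hψχ : ψ.comp φ = χ.comp φ)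
  have hone : ψ = 1 ↔ χ = 1 := by
    rw [← monoidHom_comp_eq_one_iff hφ, hψχ, monoidHom_comp_eq_one_iff hφ]
  by_cases hψ : ψ = 1
  · rw [hψ, hone.mp hψ]
  · obtain ⟨α, rfl⟩ := hG.exists_mulAut_eq hψ
    obtain ⟨β, rfl⟩ := hG.exists_mulAut_eq (mt hone.mpr hψ)
    have hβα : β⁻¹ * α = 1 := hfix _ fun h =>
      β.symm_apply_eq.mpr (DFunLike.congr_fun hψχ h)
    rw [inv_mul_eq_one.mp hβα]

theorem precomp_surjective_of_map_conj [IsSimpleGroup H]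
    (hconj : Function.Injective (MulAut.conj : G →* MulAut G)) (hφ : Function.Injective φ)
    {j : MulAut H →* MulAut G} (hj : ∀ h, j (MulAut.conj h) = MulAut.conj (φ h))
    (hrange : ∀ H' : Subgroup G, Nonempty (H' ≃* H) →
      ∃ α : MulAut G, φ.range.map α.toMonoidHom = H') :
    Function.Surjective fun ψ : G →* G => ψ.comp φ := by
  intro f
  by_cases hf : f = 1
  · exact ⟨1, by simp only [hf, MonoidHom.one_comp]⟩
  · have hf_inj := monoidHom_injective_of_ne_one hf
    obtain ⟨α, hα⟩ := hrange f.range ⟨(MonoidHom.ofInjective hf_inj).symm⟩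
    rw [MonoidHom.map_range] at hα
    obtain ⟨b, hb⟩ := exists_mulAut_comp_eq_of_range_eq (α.injective.comp hφ) hf_inj hα
    refine ⟨(α * j b).toMonoidHom, MonoidHom.ext fun h => ?_⟩
    calc α (j b (φ h)) = α (φ (b h)) := by rw [mulAut_apply_of_map_conj hconj hj]
      _ = f h := hb h

end Precomposition

theorem statement2_general (G : Type*) [Group G] [IsSimpleGroup G] (hcoHopf : IsCoHopfian G)
    (hG : ¬ ∀ a b : G, a * b = b * a)
    (H : Subgroup G) [IsSimpleGroup H] :
    IsLocalizationHom H.subtype ↔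
      ((∃ j : MulAut H →* MulAut G, Function.Injective j ∧
          ∀ h : H, j (MulAut.conj h) = MulAut.conj (h : G)) ∧
       (∀ H' : Subgroup G, Nonempty (H' ≃* H) →
          ∃ α : MulAut G, H.map α.toMonoidHom = H') ∧
       (∀ β : MulAut G, (∀ h ∈ H, β h = h) → β = 1)) := by
  constructor
  · intro hloc
    refine ⟨⟨hloc.mapAut, hloc.mapAut_injective H.subtype_injective, hloc.mapAut_conj⟩, ?_, ?_⟩
    · rintro H' ⟨e⟩
      simpa only [H.range_subtype] using hloc.exists_mulAut_map_range_eq hcoHopf e.symm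
    · exact fun β hβ => hloc.mulAut_ext fun h => hβ h h.2
  · rintro ⟨⟨j, -, hj⟩, himage, hfix⟩
    have hsubtype : H.subtype ≠ 1 := monoidHom_ne_one_of_injective H.subtype_injective
    refine ⟨precomp_injective_of_mulAut_fixing_eq_one hcoHopf hsubtype fun β hβ =>
        hfix β fun h hh => hβ ⟨h, hh⟩,
      precomp_surjective_of_map_conj (conj_injective_of_not_commutative hG)
        H.subtype_injective hj ?_⟩
    simpa only [H.range_subtype] using himage

/-- For a non-abelian simple subgroup `H` of a finite non-abelian simple
group `G`, the inclusion `H ↪ G` is a localization iff (1) there is an injective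
homomorphism `j : Aut(H) →* Aut(G)` with `j(c_h) = c_h` for all `h ∈ H`; (2) every
subgroup of `G` isomorphic to `H` is the image of `H` under some automorphism of `G`;
(3) the only automorphism of `G` fixing `H` pointwise is the identity. -/
theorem statement2 (G : Type*) [Group G] [Finite G] [IsSimpleGroup G]
    (hG : ¬ ∀ a b : G, a * b = b * a)
    (H : Subgroup G) [IsSimpleGroup H]
    (hH : ¬ ∀ a b : H, a * b = b * a) :
    IsLocalizationHom H.subtype ↔
      ((∃ j : MulAut H →* MulAut G, Function.Injective j ∧
          ∀ h : H, j (MulAut.conj h) = MulAut.conj (h : G)) ∧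
       (∀ H' : Subgroup G, Nonempty (H' ≃* H) →
          ∃ α : MulAut G, H.map α.toMonoidHom = H') ∧
       (∀ β : MulAut G, (∀ h ∈ H, β h = h) → β = 1)) :=
  statement2_general G (isCoHopfian_of_finite G) hG H
end

section
/- Let H be a non-abelian simple subgroup of a finite non-abelian simple group G, and assume H is a maximal subgroup of G. Then the inclusion i : H ↪ G is a localization if and only if the following three conditions hold: (1) there exists an injective group homomorphism j : Aut(H) → Aut(G) such that j(c_h) = c_h for every h ∈ H; (2) for every subgroup H' of G isomorphic to H, there exists an automorphism α of G with α(H) = H'; (3) the number n of conjugacy classes of subgroups of G isomorphic to H satisfies n · |Aut(H)| · |G| = |Aut(G)| · |H| (that is, n = |Out(G)|/|Out(H)|, since for a group X with trivial center |Out(X)| = |Aut(X)|/|X|). -/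
open scoped Pointwise

/-!
Since `G` is simple and finite, an endomorphism of `G` is trivial or an automorphism, and since `H`
is simple, a homomorphism `H →* G` is trivial or injective. So the inclusion is a localization iff
restriction `Aut(G) → Emb(H, G)` is bijective, where `Emb(H, G)` is the set of injective
homomorphisms.

Conditions (1) and (2) give surjectivity: by (2) an embedding `f` is `α ∘ β` for some `α ∈ Aut(G)`
and `β ∈ Aut(H)`, and `j β` extends `β`, because `c_{(j β) h} = (j β) c_h (j β)⁻¹ = c_{β h}` and `G`
has trivial center. Given (2), all subgroups isomorphic to `H` have normalizers of the same order,
so orbit counting gives `n · |Aut(H)| · |G| = |Emb(H, G)| · |N_G(H)|`. As a maximal subgroup is its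
own normalizer, (3) then says `|Aut(G)| = |Emb(H, G)|`.
-/

section SimpleGroup

variable {A B C : Type*} [Group A] [Group B] [Group C]

theorem eq_one_or_injective_of_isSimpleGroup [IsSimpleGroup A] (f : A →* B) :
    f = 1 ∨ Function.Injective f :=
  f.normal_ker.eq_bot_or_eq_top.symm.imp f.ker_eq_top_iff.1 f.ker_eq_bot_iff.1

theorem not_injective_one [Nontrivial A] : ¬ Function.Injective (1 : A →* B) := fun h =>
  let ⟨_, hx⟩ := exists_ne (1 : A)
  hx (h rfl)

theorem injective_of_injective_comp [IsSimpleGroup A] [Nontrivial C] {f : A →* B} {g : C →* A}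
    (hfg : Function.Injective (f.comp g)) : Function.Injective f := by
  rcases eq_one_or_injective_of_isSimpleGroup f with rfl | hf
  · exact absurd hfg not_injective_one
  · exact hf

theorem eq_one_of_comp_eq_one [IsSimpleGroup A] {f : A →* B} {g : C →* A} (hg : g ≠ 1)
    (hfg : f.comp g = 1) : f = 1 := by
  refine (eq_one_or_injective_of_isSimpleGroup f).resolve_right fun hf => hg ?_
  exact (MonoidHom.cancel_left hf).1 (hfg.trans (MonoidHom.comp_one f).symm)

theorem center_eq_bot_of_isSimpleGroup [IsSimpleGroup A] (hA : ¬ ∀ a b : A, a * b = b * a) :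
    Subgroup.center A = ⊥ := by
  refine (inferInstance : (Subgroup.center A).Normal).eq_bot_or_eq_top.resolve_right fun htop => ?_
  exact hA fun a b => Subgroup.mem_center_iff.1 (htop ▸ Subgroup.mem_top b) a

theorem normalizer_eq_self_of_isCoatom [IsSimpleGroup A] {H : Subgroup A} (hmax : IsCoatom H)
    (hbot : H ≠ ⊥) : Subgroup.normalizer (H : Set A) = H := by
  refine (hmax.le_iff.1 Subgroup.le_normalizer).resolve_left fun htop => ?_
  exact (Subgroup.normalizer_eq_top_iff.1 htop).eq_bot_or_eq_top.elim hbot hmax.1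

end SimpleGroup

section Embeddings

/-- The set `Emb(H, G)` of injective group homomorphisms `H →* G`. -/
abbrev GroupEmbedding (H G : Type*) [Group H] [Group G] : Type _ :=
  {f : H →* G // Function.Injective f}

/-- The set of subgroups of `G` isomorphic to `H`, with its conjugation action of `G`. -/
def isoSubgroups (G H : Type*) [Group G] [Group H] : SubMulAction (ConjAct G) (Subgroup G) where
  carrier := {K | Nonempty (K ≃* H)}
  smul_mem' g K := fun ⟨e⟩ => ⟨(Subgroup.equivSMul g K).symm.trans e⟩

variable {G H : Type*} [Group G] [Group H]

theorem card_quotient_comap_orbitRel :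
    Nat.card (Quotient (Setoid.comap
        (Subtype.val : {K : Subgroup G // Nonempty (K ≃* H)} → Subgroup G)
        (MulAction.orbitRel (ConjAct G) (Subgroup G)))) =
      Nat.card (Quotient (MulAction.orbitRel (ConjAct G) (isoSubgroups G H))) :=
  Nat.card_congr (Quotient.congr (Equiv.refl _)
    fun _ _ => (SubMulAction.mem_orbit_subMul_iff (p := isoSubgroups G H)).symm)

theorem exists_comp_eq_of_range_eq {f g : H →* G} (hf : Function.Injective f)
    (hg : Function.Injective g) (hfg : f.range = g.range) :
    ∃ β : MulAut H, g.comp β.toMonoidHom = f := by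
  let eg := MonoidHom.ofInjective hg
  let β := (MonoidHom.ofInjective hf).trans ((MulEquiv.subgroupCongr hfg).trans eg.symm)
  refine ⟨β, MonoidHom.ext fun h => ?_⟩
  exact congrArg Subtype.val (eg.apply_symm_apply _)

theorem range_subtype_comp_mulEquiv {K : Subgroup G} (e : H ≃* K) :
    (K.subtype.comp e.toMonoidHom).range = K := by
  rw [MonoidHom.range_comp, MonoidHom.range_eq_top.2 e.surjective, ← MonoidHom.range_eq_map,
    Subgroup.range_subtype]

theorem bijective_subtype_comp_mulEquiv : Function.Bijective
    fun p : Σ K : isoSubgroups G H, H ≃* (K : Subgroup G) =>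
      (⟨p.1.1.subtype.comp p.2.toMonoidHom, p.1.1.subtype_injective.comp p.2.injective⟩ :
        GroupEmbedding H G) := by
  constructor
  · rintro ⟨⟨K, hK⟩, (e : H ≃* K)⟩ ⟨⟨L, hL⟩, (e' : H ≃* L)⟩ heq
    have hcomp : K.subtype.comp e.toMonoidHom = L.subtype.comp e'.toMonoidHom :=
      congrArg Subtype.val heq
    obtain rfl : K = L := by
      rw [← range_subtype_comp_mulEquiv e, hcomp, range_subtype_comp_mulEquiv]
    obtain rfl : e = e' := MulEquiv.ext fun h => Subtype.ext (DFunLike.congr_fun hcomp h)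
    rfl
  · rintro ⟨f, hf⟩
    let e := MonoidHom.ofInjective hf
    exact ⟨⟨⟨f.range, ⟨e.symm⟩⟩, e⟩, rfl⟩

/-- Composition with `e : K ≃* H` identifies the isomorphisms `H ≃* K` with `Aut(H)`. -/
def mulEquivEquivMulAut {K : Type*} [Group K] (e : K ≃* H) : (H ≃* K) ≃ MulAut H where
  toFun e' := e'.trans e
  invFun β := MulEquiv.trans β e.symm
  left_inv e' := MulEquiv.ext fun h => e.symm_apply_apply (e' h)
  right_inv β := MulEquiv.ext fun h => e.apply_symm_apply (β h)

theorem card_groupEmbedding :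
    Nat.card (GroupEmbedding H G) = Nat.card (isoSubgroups G H) * Nat.card (MulAut H) := by
  rw [← Nat.card_congr (Equiv.ofBijective _ bijective_subtype_comp_mulEquiv), ← Nat.card_prod]
  exact Nat.card_congr ((Equiv.sigmaCongrRight fun K => mulEquivEquivMulAut K.2.some).trans
    (Equiv.sigmaEquivProd _ _))

end Embeddings

section OrbitCounting

theorem card_eq_card_orbits_mul_of_index_stabilizer_eq {Γ X : Type*} [Group Γ] [MulAction Γ X]
    [Finite X] {k : ℕ} (hk : ∀ x : X, (MulAction.stabilizer Γ x).index = k) :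
    Nat.card X = Nat.card (Quotient (MulAction.orbitRel Γ X)) * k := by
  have := Fintype.ofFinite (Quotient (MulAction.orbitRel Γ X))
  have card_orbit (ω : Quotient (MulAction.orbitRel Γ X)) :
      Nat.card (MulAction.orbitRel.Quotient.orbit ω) = k := by
    rw [MulAction.orbitRel.Quotient.orbit_eq_orbit_out ω Quotient.out_eq', ← hk ω.out,
      MulAction.index_stabilizer, Nat.card_coe_set_eq]
  rw [Nat.card_congr (MulAction.selfEquivSigmaOrbits' Γ X), Nat.card_sigma]
  simp only [card_orbit, Finset.sum_const, Finset.card_univ, smul_eq_mul, Nat.card_eq_fintype_card]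

variable {G : Type*} [Group G]

theorem index_stabilizer_conjAct (K : Subgroup G) :
    (MulAction.stabilizer (ConjAct G) K).index = (Subgroup.normalizer (K : Set G)).index := by
  have stabilizer_eq : MulAction.stabilizer (ConjAct G) K =
      (Subgroup.normalizer (K : Set G)).comap
        (ConjAct.ofConjAct : ConjAct G ≃* G).toMonoidHom :=
    Subgroup.ext fun _ => Subgroup.conjAct_pointwise_smul_iff
  rw [stabilizer_eq, Subgroup.index_comap_of_surjective _ ConjAct.ofConjAct.surjective]

theorem index_normalizer_map_mulEquiv {N : Type*} [Group N] (H : Subgroup G) (e : G ≃* N) :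
    (Subgroup.normalizer (H.map e.toMonoidHom : Set N)).index =
      (Subgroup.normalizer (H : Set G)).index := by
  rw [← Subgroup.index_map_equiv (Subgroup.normalizer (H : Set G)) e]
  exact congrArg Subgroup.index (Subgroup.map_equiv_normalizer_eq H e).symm

variable [Finite G] {H : Subgroup G}

theorem card_isoSubgroups
    (htrans : ∀ K : Subgroup G, Nonempty (K ≃* H) → ∃ α : MulAut G, H.map α.toMonoidHom = K) :
    Nat.card (isoSubgroups G H) =
      Nat.card (Quotient (MulAction.orbitRel (ConjAct G) (isoSubgroups G H))) *
        (Subgroup.normalizer (H : Set G)).index := by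
  refine card_eq_card_orbits_mul_of_index_stabilizer_eq fun K => ?_
  obtain ⟨α, hα⟩ := htrans K K.2
  rw [SubMulAction.stabilizer_of_subMul, index_stabilizer_conjAct, ← hα,
    index_normalizer_map_mulEquiv]

theorem card_orbits_mul_card_mulAut_mul_card
    (htrans : ∀ K : Subgroup G, Nonempty (K ≃* H) → ∃ α : MulAut G, H.map α.toMonoidHom = K) :
    Nat.card (Quotient (MulAction.orbitRel (ConjAct G) (isoSubgroups G H))) *
        Nat.card (MulAut H) * Nat.card G =
      Nat.card (GroupEmbedding H G) * Nat.card (Subgroup.normalizer (H : Set G)) := by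
  rw [card_groupEmbedding, card_isoSubgroups htrans,
    ← (Subgroup.normalizer (H : Set G)).index_mul_card]
  ring

end OrbitCounting

section Restriction

variable {G : Type*} [Group G]

/-- The restriction map `Aut(G) → Emb(H, G)`. -/
def autRestrict (H : Subgroup G) (α : MulAut G) : GroupEmbedding H G :=
  ⟨α.toMonoidHom.comp H.subtype, α.injective.comp H.subtype_injective⟩

theorem exists_mulAut_of_injective [Finite G] {ψ : G →* G} (hψ : Function.Injective ψ) :
    ∃ α : MulAut G, α.toMonoidHom = ψ :=
  ⟨MulEquiv.ofBijective ψ (Finite.injective_iff_bijective.1 hψ), rfl⟩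

variable {H : Subgroup G}

theorem isLocalizationHom_subtype_iff [Finite G] [IsSimpleGroup G] [IsSimpleGroup H] :
    IsLocalizationHom H.subtype ↔ Function.Bijective (autRestrict H) := by
  have subtype_ne_one : H.subtype ≠ 1 := fun h => not_injective_one (h ▸ H.subtype_injective)
  constructor
  · rintro ⟨hinj, hsurj⟩
    refine ⟨fun α β hαβ => ?_, fun ⟨f, hf⟩ => ?_⟩
    · exact MulEquiv.toMonoidHom_injective (hinj (congrArg Subtype.val hαβ))
    · obtain ⟨ψ, rfl⟩ := hsurj f
      obtain ⟨α, rfl⟩ := exists_mulAut_of_injective (injective_of_injective_comp hf)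
      exact ⟨α, rfl⟩
  · rintro ⟨hinj, hsurj⟩
    refine ⟨fun ψ χ (hψχ : ψ.comp H.subtype = χ.comp H.subtype) => ?_, fun f => ?_⟩
    · rcases eq_one_or_injective_of_isSimpleGroup ψ with rfl | hψ
      · exact (eq_one_of_comp_eq_one subtype_ne_one hψχ.symm).symm
      · have hψH : Function.Injective (ψ.comp H.subtype) := hψ.comp H.subtype_injective
        have hχ : Function.Injective χ := injective_of_injective_comp (hψχ ▸ hψH)
        obtain ⟨α, rfl⟩ := exists_mulAut_of_injective hψ
        obtain ⟨β, rfl⟩ := exists_mulAut_of_injective hχ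
        rw [hinj (Subtype.ext hψχ : autRestrict H α = autRestrict H β)]
    · rcases eq_one_or_injective_of_isSimpleGroup f with rfl | hf
      · exact ⟨1, rfl⟩
      · obtain ⟨α, hα⟩ := hsurj ⟨f, hf⟩
        exact ⟨α.toMonoidHom, congrArg Subtype.val hα⟩

theorem exists_map_eq_of_surjective_autRestrict (hsurj : Function.Surjective (autRestrict H))
    {K : Subgroup G} (e : K ≃* H) : ∃ α : MulAut G, H.map α.toMonoidHom = K := by
  obtain ⟨α, hα⟩ := hsurj
    ⟨K.subtype.comp e.symm.toMonoidHom, K.subtype_injective.comp e.symm.injective⟩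
  have hcomp : α.toMonoidHom.comp H.subtype = K.subtype.comp e.symm.toMonoidHom :=
    congrArg Subtype.val hα
  refine ⟨α, ?_⟩
  rw [← range_subtype_comp_mulEquiv e.symm, ← hcomp, MonoidHom.range_comp, Subgroup.range_subtype]

theorem exists_mulAut_hom_of_bijective_autRestrict (hbij : Function.Bijective (autRestrict H)) :
    ∃ j : MulAut H →* MulAut G, Function.Injective j ∧
      ∀ h : H, j (MulAut.conj h) = MulAut.conj (h : G) := by
  have ext_on_H {α α' : MulAut G} (h : ∀ x : H, α x = α' x) : α = α' :=
    hbij.1 (Subtype.ext (MonoidHom.ext h))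
  have exists_extension (β : MulAut H) : ∃ α : MulAut G, ∀ x : H, α x = (β x : G) := by
    obtain ⟨α, hα⟩ := hbij.2
      ⟨H.subtype.comp β.toMonoidHom, H.subtype_injective.comp β.injective⟩
    exact ⟨α, DFunLike.congr_fun (congrArg Subtype.val hα)⟩
  choose extend extend_apply using exists_extension
  refine ⟨MonoidHom.mk' extend fun β γ => ext_on_H fun x => ?_, fun β γ hβγ => ?_, fun h => ?_⟩
  · rw [extend_apply, MulAut.mul_apply, MulAut.mul_apply, extend_apply, extend_apply]
  · refine MulEquiv.ext fun x => Subtype.ext ?_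
    rw [← extend_apply, ← extend_apply]
    exact DFunLike.congr_fun hβγ (x : G)
  · exact ext_on_H (extend_apply (MulAut.conj h))

theorem mulAut_mul_conj_mul_inv (β : MulAut G) (x : G) :
    β * MulAut.conj x * β⁻¹ = MulAut.conj (β x) := by
  ext y
  simp [MulAut.mul_apply]

theorem conj_injective_of_center_eq_bot (hcenter : Subgroup.center G = ⊥) :
    Function.Injective (MulAut.conj : G →* MulAut G) := by
  refine (injective_iff_map_eq_one _).2 fun z hz => ?_
  have hz_mem : z ∈ Subgroup.center G := Subgroup.mem_center_iff.2 fun g =>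
    (mul_inv_eq_iff_eq_mul.1 (DFunLike.congr_fun hz g)).symm
  rwa [hcenter, Subgroup.mem_bot] at hz_mem

theorem mulAut_hom_apply_coe (hcenter : Subgroup.center G = ⊥) {j : MulAut H →* MulAut G}
    (hj : ∀ h : H, j (MulAut.conj h) = MulAut.conj (h : G)) (β : MulAut H) (h : H) :
    j β h = (β h : G) := by
  apply conj_injective_of_center_eq_bot hcenter
  rw [← mulAut_mul_conj_mul_inv, ← hj, ← hj, ← mulAut_mul_conj_mul_inv, map_mul, map_mul, map_inv]

theorem surjective_autRestrict (hcenter : Subgroup.center G = ⊥) {j : MulAut H →* MulAut G}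
    (hj : ∀ h : H, j (MulAut.conj h) = MulAut.conj (h : G))
    (htrans : ∀ K : Subgroup G, Nonempty (K ≃* H) → ∃ α : MulAut G, H.map α.toMonoidHom = K) :
    Function.Surjective (autRestrict H) := by
  rintro ⟨f, hf⟩
  obtain ⟨α, hα⟩ := htrans f.range ⟨(MonoidHom.ofInjective hf).symm⟩
  have hrange : f.range = (autRestrict H α).1.range := by
    rw [← hα, autRestrict, MonoidHom.range_comp, Subgroup.range_subtype]
  obtain ⟨β, rfl⟩ := exists_comp_eq_of_range_eq hf (autRestrict H α).2 hrange
  refine ⟨α * j β, Subtype.ext (MonoidHom.ext fun h => ?_)⟩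
  exact congrArg α (mulAut_hom_apply_coe hcenter hj β h)

end Restriction

theorem statement6_general (G : Type*) [Group G] [Finite G] [IsSimpleGroup G]
    (hG : ¬ ∀ a b : G, a * b = b * a)
    (H : Subgroup G) [IsSimpleGroup H] :
    IsLocalizationHom H.subtype ↔
      ((∃ j : MulAut H →* MulAut G, Function.Injective j ∧
          ∀ h : H, j (MulAut.conj h) = MulAut.conj (h : G)) ∧
       (∀ H' : Subgroup G, Nonempty (H' ≃* H) →
          ∃ α : MulAut G, H.map α.toMonoidHom = H') ∧
       Nat.card (Quotient (Setoid.comap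
            (Subtype.val : {K : Subgroup G // Nonempty (K ≃* H)} → Subgroup G)
            (MulAction.orbitRel (ConjAct G) (Subgroup G)))) *
          Nat.card (MulAut H) * Nat.card G
        = Nat.card (MulAut G) * Nat.card (Subgroup.normalizer (H : Set G))) := by
  rw [isLocalizationHom_subtype_iff, card_quotient_comap_orbitRel]
  constructor
  · intro hbij
    have htrans (K : Subgroup G) : Nonempty (K ≃* H) → ∃ α : MulAut G, H.map α.toMonoidHom = K :=
      fun ⟨e⟩ => exists_map_eq_of_surjective_autRestrict hbij.2 e
    refine ⟨exists_mulAut_hom_of_bijective_autRestrict hbij, htrans, ?_⟩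
    rw [card_orbits_mul_card_mulAut_mul_card htrans, Nat.card_eq_of_bijective _ hbij]
  · rintro ⟨⟨j, -, hj⟩, htrans, hcount⟩
    have hsurj := surjective_autRestrict (center_eq_bot_of_isSimpleGroup hG) hj htrans
    rw [card_orbits_mul_card_mulAut_mul_card htrans] at hcount
    have hcard := Nat.eq_of_mul_eq_mul_right Nat.card_pos hcount
    exact (Nat.bijective_iff_surjective_and_card _).2 ⟨hsurj, hcard.symm⟩

/-- For a non-abelian simple *maximal* subgroup `H` of a finite
non-abelian simple group `G`, the inclusion is a localization iff (1) there is an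
injective homomorphism `j : Aut(H) →* Aut(G)` with `j(c_h) = c_h`; (2) every subgroup
of `G` isomorphic to `H` is the image of `H` under an automorphism of `G`; (3) the
number `n` of conjugacy classes of subgroups of `G` isomorphic to `H` satisfies
`n · |Aut H| · |G| = |Aut G| · |H|`. -/
theorem statement6 (G : Type*) [Group G] [Finite G] [IsSimpleGroup G]
    (hG : ¬ ∀ a b : G, a * b = b * a)
    (H : Subgroup G) [IsSimpleGroup H]
    (hH : ¬ ∀ a b : H, a * b = b * a)
    (hmax : IsCoatom H) :
    IsLocalizationHom H.subtype ↔
      ((∃ j : MulAut H →* MulAut G, Function.Injective j ∧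
          ∀ h : H, j (MulAut.conj h) = MulAut.conj (h : G)) ∧
       (∀ H' : Subgroup G, Nonempty (H' ≃* H) →
          ∃ α : MulAut G, H.map α.toMonoidHom = H') ∧
       Nat.card (Quotient (Setoid.comap
            (Subtype.val : {K : Subgroup G // Nonempty (K ≃* H)} → Subgroup G)
            (MulAction.orbitRel (ConjAct G) (Subgroup G)))) *
          Nat.card (MulAut H) * Nat.card G
        = Nat.card (MulAut G) * Nat.card H) := by
  have hself := normalizer_eq_self_of_isCoatom hmax (H.nontrivial_iff_ne_bot.1 inferInstance)
  simpa only [hself] using statement6_general G hG H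
end

section
/- Let H be a non-abelian finite simple group and K a maximal subgroup of H of index n ≥ 7. Suppose that: (1) every proper subgroup of H has order at most |K|; and (2) every subgroup of H of index n is conjugate to K. Then the permutation representation of H on the left cosets H/K, which is injective and takes values in the alternating group on the n-element set H/K, is a localization H ↪ A_n. -/
/-!
Write `n = |H/K|`. A nontrivial homomorphism `H → A_n` moves some point; the stabilizer of that
point has index at most `n` by orbit–stabilizer and at least `n` by (1), so it is conjugate to `K`
by (2). Hence the homomorphism is the coset representation conjugated by a permutation of `H/K`.
That permutation is unique, because a permutation commuting with `H` corresponds to an element of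
`N(K)/K`, which is trivial.

It remains to see that every nontrivial endomorphism `ψ` of `A_n` is conjugation by a permutation.
By simplicity `ψ` is bijective. It preserves 3-cycles: the commutator of a 3-cycle with an even
permutation is an involution, trivial or of odd order, while any other element of order 3 has a
commutator of even order greater than 2. The image of a point stabilizer is a simple group of
order `(n - 1)! / 2 > (n - 2)!`; such a group cannot act nontrivially on at most `n - 2` points,
so it fixes a point or is primitive, and in the latter case it would contain `A_n` by Jordan's
theorem on 3-cycles. So `ψ` permutes the point stabilizers, and is conjugation by the induced
permutation of the points.
-/

open Equiv MulAction
open scoped Pointwise commutatorElement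

section SimpleGroups

variable {G : Type*} [Group G]

theorem normalizer_eq_self_of_isCoatom_s7 {K : Subgroup G} (hK : IsCoatom K)
    (hnormal : ¬ K.Normal) : Subgroup.normalizer (K : Set G) = K :=
  (hK.le_iff.1 Subgroup.le_normalizer).resolve_left (mt Subgroup.normalizer_eq_top_iff.1 hnormal)

variable [IsSimpleGroup G]

theorem injective_of_ne_one_of_isSimpleGroup {N : Type*} [Group N] {f : G →* N} (hf : f ≠ 1) :
    Function.Injective f :=
  (MonoidHom.ker_eq_bot_iff f).1 <|
    f.normal_ker.eq_bot_or_eq_top.resolve_right (mt MonoidHom.ker_eq_top_iff.1 hf)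

theorem monoidHom_eq_one_of_not_commutative (hG : ¬ ∀ a b : G, a * b = b * a) {A : Type*}
    [CommGroup A] (f : G →* A) : f = 1 := by
  by_contra hf
  exact hG fun a b ↦ injective_of_ne_one_of_isSimpleGroup hf (by rw [map_mul, map_mul, mul_comm])

theorem not_normal_of_isCoatom_of_not_commutative (hG : ¬ ∀ a b : G, a * b = b * a)
    {K : Subgroup G} (hK : IsCoatom K) : ¬ K.Normal := by
  intro hnormal
  obtain rfl : K = ⊥ := hnormal.eq_bot_or_eq_top.resolve_right hK.1
  refine hG fun a b ↦ ?_
  obtain rfl | ha := eq_or_ne a 1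
  · simp
  have hgen : Subgroup.zpowers a = ⊤ :=
    hK.2 _ (bot_lt_iff_ne_bot.2 (mt Subgroup.zpowers_eq_bot.1 ha))
  obtain ⟨k, rfl⟩ : b ∈ Subgroup.zpowers a := hgen ▸ Subgroup.mem_top b
  exact (Commute.refl a).zpow_right k

theorem injective_toPermHom_quotient {K : Subgroup G} (hK : K ≠ ⊤) :
    Function.Injective (toPermHom G (G ⧸ K)) := by
  rw [← MonoidHom.ker_eq_bot_iff, ← Subgroup.normalCore_eq_ker]
  exact K.normalCore_normal.eq_bot_or_eq_top.resolve_right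
    fun h ↦ hK (top_le_iff.1 (h ▸ K.normalCore_le))

theorem mem_fixedPoints_of_factorial_ncard_orbit_lt {X : Type*} [MulAction G X] {x : X}
    (hx : (orbit G x).ncard.factorial < Nat.card G) : x ∈ fixedPoints G X := by
  have : Finite G := Nat.finite_of_card_ne_zero (by omega)
  have : Finite (orbit G x) := Set.finite_range _
  suffices toPermHom G (orbit G x) = 1 by
    intro g
    have hg := Perm.ext_iff.1 (DFunLike.congr_fun this g) ⟨x, mem_orbit_self x⟩
    exact congrArg Subtype.val hg
  by_contra hne
  have hcard := Nat.card_le_card_of_injective _ (injective_of_ne_one_of_isSimpleGroup hne)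
  rw [Nat.card_perm, Nat.card_coe_set_eq] at hcard
  omega

theorem nonempty_fixedPoints_or_isPretransitive_of_factorial_lt_card {X : Type*}
    [Finite X] [MulAction G X] (hG : (Nat.card X - 2).factorial < Nat.card G) :
    (fixedPoints G X).Nonempty ∨ IsPretransitive G X := by
  by_contra! h
  obtain ⟨hfixed, htrans⟩ := h
  have lt_ncard_orbit (x : X) : Nat.card X - 2 < (orbit G x).ncard := by
    by_contra! hle
    exact hfixed.subset
      (mem_fixedPoints_of_factorial_ncard_orbit_lt ((Nat.factorial_le hle).trans_lt hG))
  obtain ⟨x, y, hxy⟩ : ∃ x y : X, y ∉ orbit G x := by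
    by_contra! h
    exact htrans ⟨h⟩
  have hdisj : Disjoint (orbit G x) (orbit G y) :=
    (orbit.eq_or_disjoint x y).resolve_left fun h ↦ hxy (h ▸ mem_orbit_self y)
  have hcard : (orbit G x).ncard + (orbit G y).ncard ≤ Nat.card X := by
    rw [← Set.ncard_union_eq hdisj]
    exact Set.ncard_le_card _
  have one_lt_ncard (z : X) : 1 < (orbit G z).ncard := by
    rw [Set.one_lt_ncard_iff_nontrivial, ← Set.not_subsingleton_iff,
      subsingleton_orbit_iff_mem_fixedPoints, hfixed]
    exact Set.notMem_empty z
  have := lt_ncard_orbit x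
  have := one_lt_ncard y
  omega

theorem isPreprimitive_of_factorial_lt_card {X : Type*} [Finite X] [MulAction G X]
    [IsPretransitive G X] (hG : (Nat.card X - 2).factorial < Nat.card G) : IsPreprimitive G X where
  isTrivialBlock_of_isBlock {B} hB := by
    by_contra h
    obtain ⟨hnontrivial, hne_univ⟩ := not_or.1 h
    rw [Set.not_subsingleton_iff] at hnontrivial
    have two_le_ncard : 2 ≤ B.ncard := Set.one_lt_ncard_iff_nontrivial.2 hnontrivial
    have ncard_le_half : B.ncard * 2 ≤ Nat.card X := by
      by_contra! hlt
      exact hne_univ (hB.eq_univ_of_card_lt hlt)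
    have hmul := hB.ncard_block_mul_ncard_orbit_eq hnontrivial.nonempty
    have horbit : (orbit G B).ncard ≤ Nat.card X - 2 := by
      have : 2 ≤ (orbit G B).ncard := by nlinarith
      have : (orbit G B).ncard + 2 ≤ Nat.card X := by nlinarith
      omega
    have hfixed : B ∈ fixedPoints G (Set X) :=
      mem_fixedPoints_of_factorial_ncard_orbit_lt ((Nat.factorial_le horbit).trans_lt hG)
    obtain ⟨b, hb⟩ := hnontrivial.nonempty
    refine hne_univ (Set.eq_univ_of_forall fun z ↦ ?_)
    obtain ⟨g, rfl⟩ := exists_smul_eq G b z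
    exact hfixed g ▸ Set.smul_mem_smul_set hb

end SimpleGroups

theorem exists_conj_toPermHom_of_stabilizer_eq {G X : Type*} [Group G] [MulAction G X] [Finite X]
    [IsPretransitive G X] (φ : G →* Perm X) {x y : X}
    (hxy : (stabilizer (Perm X) x).comap φ = stabilizer G y) :
    ∃ σ : Perm X, φ = (MulAut.conj σ).toMonoidHom.comp (toPermHom G X) := by
  have apply_eq_iff (g h : G) : φ g x = φ h x ↔ g • y = h • y := by
    have := SetLike.ext_iff.1 hxy (g⁻¹ * h)
    rwa [Subgroup.mem_comap, mem_stabilizer_iff, mem_stabilizer_iff, map_mul, map_inv,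
      mul_smul, mul_smul, inv_smul_eq_iff, inv_smul_eq_iff, Perm.smul_def, Perm.smul_def,
      eq_comm, eq_comm (a := h • y)] at this
  choose r hr using exists_smul_eq G y
  let f (z : X) : X := φ (r z) x
  have f_smul (g : G) : f (g • y) = φ g x := (apply_eq_iff _ _).2 (hr _)
  have f_injective : Function.Injective f := fun z w h ↦ by
    rw [← hr z, ← hr w]
    exact (apply_eq_iff _ _).1 h
  refine ⟨Equiv.ofBijective f (Finite.injective_iff_bijective.1 f_injective), ?_⟩
  ext1 g
  change φ g = _ * toPermHom G X g * _⁻¹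
  rw [eq_mul_inv_iff_mul_eq]
  ext z
  obtain ⟨h, rfl⟩ := exists_smul_eq G y z
  simp [f_smul, smul_smul]

section CosetAction

variable {H : Type*} [Group H] {K : Subgroup H}

theorem centralizer_range_toPermHom_quotient_eq_bot (hK : Subgroup.normalizer (K : Set H) = K) :
    Subgroup.centralizer ((toPermHom H (H ⧸ K)).range : Set (Perm (H ⧸ K))) = ⊥ := by
  rw [eq_bot_iff]
  intro c hc
  have c_smul (h : H) (x : H ⧸ K) : c (h • x) = h • c x :=
    (Perm.ext_iff.1 (hc _ ⟨h, rfl⟩) x).symm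
  obtain ⟨a, ha⟩ := QuotientGroup.mk_surjective (c (1 : H))
  have ha_mem : a ∈ K := by
    rw [← hK, Subgroup.mem_normalizer_iff'']
    intro h
    calc h ∈ K ↔ h • ((1 : H) : H ⧸ K) = (1 : H) := by
          rw [← mem_stabilizer_iff, stabilizer_quotient]
      _ ↔ h • (a : H ⧸ K) = a := by rw [ha, ← c_smul, c.apply_eq_iff_eq]
      _ ↔ a⁻¹ * h * a ∈ K := by
          rw [eq_comm, mul_assoc, ← QuotientGroup.eq, Quotient.smul_coe, smul_eq_mul]
  have c_one : c (1 : H) = (1 : H) := by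
    rwa [← ha, eq_comm, QuotientGroup.eq, inv_one, one_mul]
  ext z
  obtain ⟨b, rfl⟩ := exists_smul_eq H ((1 : H) : H ⧸ K) z
  rw [c_smul, c_one, Perm.one_apply]

theorem index_comap_stabilizer_le_card {X : Type*} [Finite X] (φ : H →* Perm X) (x : X) :
    ((stabilizer (Perm X) x).comap φ).index ≤ Nat.card X := by
  rw [← index_stabilizer_of_transitive (Perm X) x, Subgroup.index_comap]
  exact (Subgroup.relIndex_le_of_le_right le_top
    (by simp [Subgroup.relIndex_top_right, Subgroup.index_ne_zero_of_finite])).trans_eq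
    (Subgroup.relIndex_top_right _)

theorem exists_conj_toPermHom_quotient_of_ne_one [Finite H]
    (hcard : ∀ L : Subgroup H, L ≠ ⊤ → Nat.card L ≤ Nat.card K)
    (hconj : ∀ L : Subgroup H, L.index = K.index →
        ∃ h : H, L = K.map (MulAut.conj h).toMonoidHom)
    {φ : H →* Perm (H ⧸ K)} (hφ : φ ≠ 1) :
    ∃ σ : Perm (H ⧸ K), φ = (MulAut.conj σ).toMonoidHom.comp (toPermHom H (H ⧸ K)) := by
  obtain ⟨x, hx⟩ : ∃ x, (stabilizer (Perm (H ⧸ K)) x).comap φ ≠ ⊤ := by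
    by_contra! h
    refine hφ (MonoidHom.ext fun g ↦ Perm.ext fun x ↦ ?_)
    exact (SetLike.ext_iff.1 (h x) g).2 trivial
  have index_eq : ((stabilizer (Perm (H ⧸ K)) x).comap φ).index = K.index := by
    refine (index_comap_stabilizer_le_card φ x).antisymm ?_
    refine Nat.le_of_mul_le_mul_left ?_ (Nat.card_pos (α := K))
    rw [← K.index_eq_card, K.card_mul_index, ← Subgroup.card_mul_index (Subgroup.comap φ _)]
    exact Nat.mul_le_mul_right _ (hcard _ hx)
  obtain ⟨h, hL⟩ := hconj _ index_eq
  apply exists_conj_toPermHom_of_stabilizer_eq φ (x := x) (y := h • ((1 : H) : H ⧸ K))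
  rw [hL, stabilizer_smul_eq_stabilizer_map_conj, stabilizer_quotient]

end CosetAction

section ThreeCycles

variable {α : Type*}

theorem even_orderOf_of_apply_eq_of_apply_eq {x : Perm α} {a b : α} (hab : a ≠ b) (ha : x a = b)
    (hb : x b = a) : Even (orderOf x) := by
  by_contra h
  obtain ⟨m, hm⟩ := Nat.not_even_iff_odd.1 h
  have sq_apply : (x ^ 2) a = a := by rw [sq, Perm.mul_apply, ha, hb]
  have pow_apply : (x ^ orderOf x) a = b := by
    rw [hm, pow_succ', pow_mul, Perm.mul_apply,
      Perm.pow_apply_eq_self_of_apply_eq_self sq_apply, ha]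
  exact hab (by rw [← pow_apply, pow_orderOf_eq_one, Perm.one_apply])

variable [DecidableEq α]

theorem even_orderOf_commutator_swap_mul_swap {u : Perm α} (hu : u ^ 3 = 1) {a b z : α}
    (ha : u a ≠ a) (hb : u b ≠ b) (hab : b ∉ ({a, u a, u (u a)} : Finset α))
    (hz : z ∉ ({a, u a, u (u a), b, u b, u (u b)} : Finset α)) :
    ⁅swap a b * swap (u a) z, u⁆ ^ 2 ≠ 1 ∧ Even (orderOf ⁅swap a b * swap (u a) z, u⁆) := by
  have hu_apply (p : α) : u (u (u p)) = p := Perm.ext_iff.1 hu p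
  have hinj := u.injective
  simp only [Finset.mem_insert, Finset.mem_singleton, not_or] at hab hz
  set x := ⁅swap a b * swap (u a) z, u⁆
  have hx : x = swap a b * swap (u a) z * (swap (u (u a)) (u z) * swap (u a) (u b)) := by
    rw [swap_apply_apply u (u a) z, swap_apply_apply u a b]
    simp only [x, commutatorElement_def, mul_inv_rev, swap_inv]
    group
  have apply_a : x a = b := by simp only [hx, Perm.mul_apply]; grind
  have apply_b : x b = a := by simp only [hx, Perm.mul_apply]; grind
  have apply_ua : x (u a) = u b := by simp only [hx, Perm.mul_apply]; grind
  have apply_ub : x (u b) = z := by simp only [hx, Perm.mul_apply]; grind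
  refine ⟨fun hsq ↦ hz.2.1 ?_, even_orderOf_of_apply_eq_of_apply_eq (Ne.symm hab.1) apply_a apply_b⟩
  rw [← apply_ub, ← apply_ua, ← Perm.mul_apply, ← sq, hsq, Perm.one_apply]

variable [Fintype α]

set_option maxRecDepth 100000 in
theorem sq_eq_one_or_pow_fifteen_eq_one_of_le_five {k : ℕ} (hk : k ≤ 5) (x : Perm (Fin k))
    (hx : Perm.sign x = 1) : x ^ 2 = 1 ∨ x ^ 15 = 1 := by
  revert x
  interval_cases k <;> decide

theorem sq_eq_one_or_odd_orderOf_of_card_support_le_five {x : Perm α} (hsign : Perm.sign x = 1)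
    (hsupport : x.support.card ≤ 5) : x ^ 2 = 1 ∨ Odd (orderOf x) := by
  let y : Perm x.support := x.subtypePerm fun _ ↦ Perm.apply_mem_support
  have hy : Perm.ofSubtype y = x := Perm.ofSubtype_subtypePerm _ fun _ ↦ Perm.mem_support.2
  let e : Perm x.support ≃* Perm (Fin x.support.card) := x.support.equivFin.permCongrHom
  have sign_e : Perm.sign (e y) = 1 := by
    rw [← hsign, ← congrArg Perm.sign hy, Perm.sign_ofSubtype]
    exact Perm.sign_permCongr _ _
  have pow_eq_one {k : ℕ} (h : e y ^ k = 1) : x ^ k = 1 := by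
    rw [← map_pow, EmbeddingLike.map_eq_one_iff] at h
    rw [← hy, ← map_pow, h, map_one]
  refine (sq_eq_one_or_pow_fifteen_eq_one_of_le_five hsupport _ sign_e).imp pow_eq_one fun h ↦ ?_
  exact Odd.of_dvd_nat (by decide) (orderOf_dvd_of_pow_eq_one (pow_eq_one h))

theorem sq_eq_one_or_odd_orderOf_mul_of_isThreeCycle {u v : Perm α} (hu : u.IsThreeCycle)
    (hv : v.IsThreeCycle) : (u * v) ^ 2 = 1 ∨ Odd (orderOf (u * v)) := by
  by_cases hdisj : u.Disjoint v
  · right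
    refine Odd.of_dvd_nat (by decide : Odd 3) ?_
    rw [hdisj.orderOf, hu.orderOf, hv.orderOf, Nat.lcm_self]
  · refine sq_eq_one_or_odd_orderOf_of_card_support_le_five ?_ ?_
    · rw [map_mul, hu.sign, hv.sign, one_mul]
    · have inter_pos : 0 < (u.support ∩ v.support).card := by
        rwa [Finset.card_pos, ← Finset.not_disjoint_iff_nonempty_inter,
          ← Perm.disjoint_iff_disjoint_support]
      have card_mul_le : (u * v).support.card ≤ (u.support ∪ v.support).card :=
        Finset.card_le_card (Perm.support_mul_le u v)
      have card_union := Finset.card_union_add_card_inter u.support v.support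
      rw [hu.card_support, hv.card_support] at card_union
      omega

theorem three_lt_card_support_of_orderOf_eq_three {u : Perm α} (hu : orderOf u = 3)
    (hu_three : ¬ u.IsThreeCycle) : 3 < u.support.card := by
  obtain ⟨k, hk⟩ := Perm.cycleType_prime_order (hu ▸ Nat.prime_three)
  have card_support : u.support.card = (k + 1) * 3 := by
    rw [← Perm.sum_cycleType, hk, hu, Multiset.sum_replicate, smul_eq_mul]
  have : u.support.card ≠ 3 := mt card_support_eq_three_iff.1 hu_three
  omega

theorem exists_mem_alternatingGroup_even_orderOf_commutator (hα : 7 ≤ Nat.card α) {u : Perm α}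
    (hu : orderOf u = 3) (hu_three : ¬ u.IsThreeCycle) :
    ∃ t ∈ alternatingGroup α, ⁅t, u⁆ ^ 2 ≠ 1 ∧ Even (orderOf ⁅t, u⁆) := by
  have hu_cube : u ^ 3 = 1 := hu ▸ pow_orderOf_eq_one u
  obtain ⟨a, ha⟩ : ∃ a, u a ≠ a := by
    by_contra! h
    simp [show u = 1 from Perm.ext h] at hu
  obtain ⟨b, hb, hab⟩ : ∃ b ∈ u.support, b ∉ ({a, u a, u (u a)} : Finset α) := by
    refine Finset.exists_mem_notMem_of_card_lt_card (Finset.card_le_three.trans_lt ?_)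
    exact three_lt_card_support_of_orderOf_eq_three hu hu_three
  obtain ⟨z, hz⟩ : ∃ z, z ∉ ({a, u a, u (u a), b, u b, u (u b)} : Finset α) := by
    by_contra! h
    have := Finset.card_le_six (a := a) (b := u a) (c := u (u a)) (d := b) (e := u b) (f := u (u b))
    rw [Finset.eq_univ_of_forall h, Finset.card_univ, ← Nat.card_eq_fintype_card] at this
    omega
  refine ⟨_, ?_, even_orderOf_commutator_swap_mul_swap hu_cube ha (Perm.mem_support.1 hb) hab hz⟩
  simp only [Finset.mem_insert, Finset.mem_singleton, not_or] at hab hz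
  rw [Perm.mem_alternatingGroup, map_mul, Perm.sign_swap (Ne.symm hab.1),
    Perm.sign_swap (Ne.symm hz.2.1), Int.units_mul_self]

theorem isThreeCycle_map_of_injective (hα : 7 ≤ Nat.card α)
    {ψ : alternatingGroup α →* alternatingGroup α} (hψ : Function.Injective ψ)
    {g : alternatingGroup α} (hg : (g : Perm α).IsThreeCycle) :
    (ψ g : Perm α).IsThreeCycle := by
  by_contra hno
  have hord : orderOf (ψ g : Perm α) = 3 := by
    rw [Subgroup.orderOf_coe, orderOf_injective ψ hψ, ← Subgroup.orderOf_coe, hg.orderOf]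
  obtain ⟨t, ht, hsq, heven⟩ := exists_mem_alternatingGroup_even_orderOf_commutator hα hord hno
  obtain ⟨s, hs⟩ := Finite.surjective_of_injective hψ ⟨t, ht⟩
  have hmap : ((ψ ⁅s, g⁆ : alternatingGroup α) : Perm α) = ⁅t, (ψ g : Perm α)⁆ := by
    rw [map_commutatorElement, hs]; rfl
  have hconj : ((s : Perm α) * g * (s : Perm α)⁻¹).IsThreeCycle := by
    rwa [Perm.IsThreeCycle, Perm.cycleType_conj]
  obtain h | h := sq_eq_one_or_odd_orderOf_mul_of_isThreeCycle hconj hg.inv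
  · have commutator_sq : ⁅s, g⁆ ^ 2 = 1 := Subtype.ext h
    rw [← hmap, ← Subgroup.coe_pow, ← map_pow, commutator_sq, map_one] at hsq
    exact hsq rfl
  · refine Nat.not_even_iff_odd.2 ?_ heven
    rwa [← hmap, Subgroup.orderOf_coe, orderOf_injective ψ hψ, ← Subgroup.orderOf_coe]

end ThreeCycles

section Alternating

variable {α : Type*} [Fintype α] [DecidableEq α]

theorem nonempty_fixedPoints_or_alternatingGroup_le {N : Subgroup (Perm α)} [IsSimpleGroup N]
    (hN : (Nat.card α - 2).factorial < Nat.card N) {g : Perm α} (hg : g.IsThreeCycle)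
    (hgN : g ∈ N) : (fixedPoints N α).Nonempty ∨ alternatingGroup α ≤ N :=
  (nonempty_fixedPoints_or_isPretransitive_of_factorial_lt_card hN).imp_right
    fun (_ : IsPretransitive N α) ↦ Perm.alternatingGroup_le_of_isPreprimitive_of_isThreeCycle_mem
      (isPreprimitive_of_factorial_lt_card hN) hg hgN

theorem stabilizer_alternatingGroup_eq_range_ofSubtype (x : α) :
    stabilizer (alternatingGroup α) x = (alternatingGroup.ofSubtype {x}ᶜ).range := by
  ext g
  rw [alternatingGroup.mem_range_ofSubtype_iff, Finset.subset_compl_singleton,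
    Perm.notMem_support, mem_stabilizer_iff]
  rfl

theorem isSimpleGroup_stabilizer_alternatingGroup (hα : 6 ≤ Nat.card α) (x : α) :
    IsSimpleGroup (stabilizer (alternatingGroup α) x) := by
  have : IsSimpleGroup (alternatingGroup ({x}ᶜ : Finset α)) := by
    refine alternatingGroup.isSimpleGroup ?_
    rw [Nat.card_eq_fintype_card, Fintype.card_coe, Finset.card_compl, Finset.card_singleton,
      ← Nat.card_eq_fintype_card]
    omega
  rw [stabilizer_alternatingGroup_eq_range_ofSubtype]
  exact (MonoidHom.ofInjective alternatingGroup.ofSubtype_injective).symm.isSimpleGroup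

theorem isCoatom_stabilizer_alternatingGroup (hα : 3 ≤ Nat.card α) (x : α) :
    IsCoatom (stabilizer (alternatingGroup α) x) := by
  have : Nontrivial α := Finite.one_lt_card_iff_nontrivial.1 (by omega)
  have := alternatingGroup.isPreprimitive_of_three_le_card α hα
  exact IsPreprimitive.isCoatom_stabilizer_of_isPreprimitive _ x

theorem two_mul_card_stabilizer_alternatingGroup (hα : 3 ≤ Nat.card α) (x : α) :
    2 * Nat.card (stabilizer (alternatingGroup α) x) = (Nat.card α - 1).factorial := by
  have : Nontrivial α := Finite.one_lt_card_iff_nontrivial.1 (by omega)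
  have := alternatingGroup.isPretransitive_of_three_le_card α hα
  refine Nat.eq_of_mul_eq_mul_left (by omega : 0 < Nat.card α) ?_
  rw [Nat.mul_factorial_pred (by omega), ← Nat.card_perm, ← two_mul_nat_card_alternatingGroup,
    ← (stabilizer (alternatingGroup α) x).index_mul_card, index_stabilizer_of_transitive]
  ring

theorem factorial_lt_card_stabilizer_alternatingGroup (hα : 4 ≤ Nat.card α) (x : α) :
    (Nat.card α - 2).factorial < Nat.card (stabilizer (alternatingGroup α) x) := by
  refine Nat.lt_of_mul_lt_mul_left (a := 2) ?_
  rw [two_mul_card_stabilizer_alternatingGroup (by omega),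
    ← Nat.mul_factorial_pred (n := Nat.card α - 1) (by omega), Nat.sub_sub]
  exact Nat.mul_lt_mul_of_pos_right (by omega) (Nat.factorial_pos _)

theorem exists_isThreeCycle_mem_stabilizer_alternatingGroup (hα : 4 < Nat.card α) (x : α) :
    ∃ g ∈ stabilizer (alternatingGroup α) x, (g : Perm α).IsThreeCycle := by
  obtain ⟨g, hgx, hg⟩ := Perm.exists_mem_stabilizer_isThreeCycle {x} hα
  rw [stabilizer_singleton] at hgx
  exact ⟨⟨g, hg.mem_alternatingGroup⟩, hgx, hg⟩

theorem exists_stabilizer_le_comap_stabilizer (hα : 7 ≤ Nat.card α)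
    {ψ : alternatingGroup α →* alternatingGroup α} (hψ : Function.Injective ψ) (x : α) :
    ∃ y : α, stabilizer (alternatingGroup α) x ≤ (stabilizer (alternatingGroup α) y).comap ψ := by
  let f : alternatingGroup α →* Perm α := (alternatingGroup α).subtype.comp ψ
  have f_injective : Function.Injective f := Subtype.val_injective.comp hψ
  let N : Subgroup (Perm α) := (stabilizer (alternatingGroup α) x).map f
  have := isSimpleGroup_stabilizer_alternatingGroup (by omega) x
  let e : stabilizer (alternatingGroup α) x ≃* N := Subgroup.equivMapOfInjective _ f f_injective
  have : IsSimpleGroup N := e.symm.isSimpleGroup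
  have card_N : Nat.card N = Nat.card (stabilizer (alternatingGroup α) x) :=
    Subgroup.card_map_of_injective f_injective
  obtain ⟨g, hgx, hg⟩ := exists_isThreeCycle_mem_stabilizer_alternatingGroup (by omega) x
  obtain ⟨y, hy⟩ | hle := nonempty_fixedPoints_or_alternatingGroup_le
    (card_N ▸ factorial_lt_card_stabilizer_alternatingGroup (by omega) x)
    (isThreeCycle_map_of_injective hα hψ hg) (Subgroup.mem_map_of_mem f hgx)
  · exact ⟨y, fun g hg ↦ hy ⟨f g, Subgroup.mem_map_of_mem f hg⟩⟩
  · have card_le : Nat.card (alternatingGroup α) ≤ Nat.card (stabilizer (alternatingGroup α) x) :=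
      card_N ▸ Subgroup.card_le_of_le hle
    exact absurd (Subgroup.eq_top_of_le_card _ card_le)
      (isCoatom_stabilizer_alternatingGroup (by omega) x).1

theorem exists_eq_conjNormal_of_injective (hα : 7 ≤ Nat.card α)
    {ψ : alternatingGroup α →* alternatingGroup α} (hψ : Function.Injective ψ) :
    ∃ τ : Perm α, ψ = (MulAut.conjNormal τ).toMonoidHom := by
  have := alternatingGroup.isPretransitive_of_three_le_card α (by omega)
  obtain ⟨x⟩ : Nonempty α := Finite.card_pos_iff.1 (by omega)
  obtain ⟨y, hxy⟩ := exists_stabilizer_le_comap_stabilizer hα hψ x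
  have comap_ne_top : (stabilizer (alternatingGroup α) y).comap ψ ≠ ⊤ := by
    rw [← Subgroup.comap_top ψ]
    refine (Subgroup.comap_injective (Finite.surjective_of_injective hψ)).ne ?_
    exact (isCoatom_stabilizer_alternatingGroup (by omega) y).1
  have comap_eq : (stabilizer (alternatingGroup α) y).comap ψ = stabilizer (alternatingGroup α) x :=
    ((isCoatom_stabilizer_alternatingGroup (by omega) x).le_iff.1 hxy).resolve_left comap_ne_top
  obtain ⟨τ, hτ⟩ := exists_conj_toPermHom_of_stabilizer_eq
    ((alternatingGroup α).subtype.comp ψ) comap_eq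
  refine ⟨τ, MonoidHom.ext fun g ↦ Subtype.ext ?_⟩
  exact DFunLike.congr_fun hτ g

end Alternating

section Localization

variable {α H : Type*} [Fintype α] [DecidableEq α] [Group H] {f : H →* alternatingGroup α}

theorem eq_of_conjNormal_comp_eq
    (hcent : Subgroup.centralizer
      (((alternatingGroup α).subtype.comp f).range : Set (Perm α)) = ⊥)
    {σ τ : Perm α} (h : (MulAut.conjNormal σ).toMonoidHom.comp f =
      (MulAut.conjNormal τ).toMonoidHom.comp f) : σ = τ := by
  have hmem : τ⁻¹ * σ ∈ Subgroup.centralizer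
      (((alternatingGroup α).subtype.comp f).range : Set (Perm α)) := by
    rintro _ ⟨a, rfl⟩
    have : σ * f a * σ⁻¹ = τ * f a * τ⁻¹ := congrArg Subtype.val (DFunLike.congr_fun h a)
    rw [mul_inv_eq_iff_eq_mul] at this
    change (f a : Perm α) * (τ⁻¹ * σ) = τ⁻¹ * σ * f a
    rw [mul_assoc, this]
    group
  rw [hcent, Subgroup.mem_bot, inv_mul_eq_one] at hmem
  exact hmem.symm

theorem isLocalizationHom_of_forall_exists_conjNormal (hα : 7 ≤ Nat.card α)
    (hconj : ∀ φ : H →* alternatingGroup α, φ ≠ 1 →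
      ∃ σ : Perm α, φ = (MulAut.conjNormal σ).toMonoidHom.comp f)
    (hcent : Subgroup.centralizer
      (((alternatingGroup α).subtype.comp f).range : Set (Perm α)) = ⊥) :
    IsLocalizationHom f := by
  have : IsSimpleGroup (alternatingGroup α) := alternatingGroup.isSimpleGroup (by omega)
  have : Nontrivial α := Finite.one_lt_card_iff_nontrivial.1 (by omega)
  have f_ne_one : f ≠ 1 := by
    rintro rfl
    obtain ⟨a, b, hab⟩ := exists_pair_ne α
    have : swap a b ∈ Subgroup.centralizer
        (((alternatingGroup α).subtype.comp (1 : H →* alternatingGroup α)).range : Set _) := by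
      rintro _ ⟨h, rfl⟩
      simp
    rw [hcent, Subgroup.mem_bot, swap_eq_one_iff] at this
    exact hab this
  have comp_ne_one {ψ : alternatingGroup α →* alternatingGroup α} (hψ : ψ ≠ 1) :
      ψ.comp f ≠ 1 := fun h ↦ f_ne_one <|
    (MonoidHom.cancel_left (injective_of_ne_one_of_isSimpleGroup hψ)).1 (h.trans ψ.comp_one.symm)
  constructor
  · intro ψ₁ ψ₂ (h : ψ₁.comp f = ψ₂.comp f)
    by_cases h₁ : ψ₁ = 1
    · subst h₁
      by_contra h₂
      exact comp_ne_one (Ne.symm h₂) h.symm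
    have h₂ : ψ₂ ≠ 1 := by
      rintro rfl
      exact comp_ne_one h₁ h
    obtain ⟨τ₁, rfl⟩ := exists_eq_conjNormal_of_injective hα
      (injective_of_ne_one_of_isSimpleGroup h₁)
    obtain ⟨τ₂, rfl⟩ := exists_eq_conjNormal_of_injective hα
      (injective_of_ne_one_of_isSimpleGroup h₂)
    rw [eq_of_conjNormal_comp_eq hcent h]
  · intro φ
    by_cases hφ : φ = 1
    · exact ⟨1, hφ ▸ f.one_comp⟩
    · obtain ⟨σ, rfl⟩ := hconj φ hφ
      exact ⟨_, rfl⟩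

end Localization

/-- Let `H` be a non-abelian finite simple group and `K` a maximal
subgroup of index `n ≥ 7` such that (1) every proper subgroup of `H` has order at most
`|K|`, and (2) every subgroup of index `n` is conjugate to `K`.  Then the permutation
representation of `H` on the cosets `H ⧸ K` is injective, lands in the alternating
group, and the resulting embedding `H ↪ Alt(H ⧸ K)` is a localization. -/
theorem statement7 (H : Type*) [Group H] [Finite H] [IsSimpleGroup H]
    (hH : ¬ ∀ a b : H, a * b = b * a)
    (K : Subgroup H) (hmax : IsCoatom K) (hn : 7 ≤ K.index)
    (h1 : ∀ L : Subgroup H, L ≠ ⊤ → Nat.card L ≤ Nat.card K)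
    (h2 : ∀ L : Subgroup H, L.index = K.index →
        ∃ h : H, L = K.map (MulAut.conj h).toMonoidHom) :
    ∀ [Fintype (H ⧸ K)] [DecidableEq (H ⧸ K)],
      Function.Injective (MulAction.toPermHom H (H ⧸ K)) ∧
      (∀ h : H, MulAction.toPermHom H (H ⧸ K) h ∈ alternatingGroup (H ⧸ K)) ∧
      (∀ f : H →* alternatingGroup (H ⧸ K),
        (∀ h : H, (f h : Equiv.Perm (H ⧸ K)) = MulAction.toPermHom H (H ⧸ K) h) →
        IsLocalizationHom f) := by
  intro _ _
  have sign_comp : Equiv.Perm.sign.comp (toPermHom H (H ⧸ K)) = 1 :=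
    monoidHom_eq_one_of_not_commutative hH _
  refine ⟨injective_toPermHom_quotient hmax.1, DFunLike.congr_fun sign_comp, fun f hf ↦ ?_⟩
  have subtype_comp : (alternatingGroup (H ⧸ K)).subtype.comp f = toPermHom H (H ⧸ K) :=
    MonoidHom.ext hf
  refine isLocalizationHom_of_forall_exists_conjNormal hn (fun φ hφ ↦ ?_) ?_
  · have subtype_comp_ne_one : (alternatingGroup (H ⧸ K)).subtype.comp φ ≠ 1 := fun h ↦
      hφ (MonoidHom.ext fun a ↦ Subtype.ext (DFunLike.congr_fun h a))
    obtain ⟨σ, hσ⟩ := exists_conj_toPermHom_quotient_of_ne_one h1 h2 subtype_comp_ne_one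
    rw [← subtype_comp] at hσ
    exact ⟨σ, MonoidHom.ext fun a ↦ Subtype.ext (DFunLike.congr_fun hσ a)⟩
  · rw [subtype_comp]
    exact centralizer_range_toPermHom_quotient_eq_bot
      (normalizer_eq_self_of_isCoatom_s7 hmax (not_normal_of_isCoatom_of_not_commutative hH hmax))
end

section
/- Let p be a prime, k ≥ 1, and q = p^k a prime power with q ≥ 13 or q = 8 (i.e. q ≥ 4 and q ∉ {4, 5, 7, 9, 11}). Then every injective group homomorphism from PSL(2, F_q) (the quotient of SL(2, F_q) by its center, where F_q is the field with q elements) into the alternating group A_{q+1} on q+1 letters is a localization. -/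
/-!
A subgroup `M ≠ ⊤` of `SL(2, q)` that contains the center and has index at most `q + 1` is the
stabilizer of a point of the projective line over `𝔽_q`. Counting shows that `M` fixes a point or is
transitive. In the transitive case let `M` act on the projective line over `𝔽_{q²}`: there a
noncentral element fixes one point or two according to whether its squared trace is `4`, so
Burnside's lemma leaves two or three orbits outside the line over `𝔽_q`. Their lengths divide the
order of the image of `M` in `PSL(2, q)` and add up to `q² - q`, which is impossible for the given
`q`. Hence all nontrivial homomorphisms from `PSL(2, q)` to `A_{q+1}` are conjugate under `S_{q+1}`
to the action on the projective line, and each of them extends to `A_{q+1}` by a conjugation.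

For uniqueness, two automorphisms of `A_n` that agree on a doubly transitive subgroup differ by an
automorphism `θ` fixing that subgroup pointwise. If `θ` did not preserve the stabilizer of a point,
the image of the stabilizer would be doubly transitive of index at most `n`, contradicting Bochert's
bound. So `θ` preserves all point stabilizers, which forces `θ = 1`.
-/

open Equiv Equiv.Perm MulAction
open Matrix.SpecialLinearGroup (lineStab)
open scoped Nat commutatorElement MatrixGroups LinearAlgebra.Projectivization Pointwise

section Bochert

variable {α : Type*} [Fintype α]

theorem factorial_le_index_of_forall_fixing_eq_one {L : Subgroup (Perm α)} {s : Finset α}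
    (hs : ∀ g ∈ L, (∀ x ∈ s, g x = x) → g = 1) : (Fintype.card α - s.card)! ≤ L.index := by
  classical
  let K : Subgroup (Perm α) := (ofSubtype : Perm {x // x ∉ s} →* Perm α).range
  have disjoint_LK : L ⊓ K = ⊥ := by
    rw [eq_bot_iff]
    rintro _ ⟨hL, k, rfl⟩
    exact hs _ hL fun x hx => ofSubtype_apply_of_not_mem k (by simpa using hx)
  have card_K : Nat.card K = (Fintype.card α - s.card)! := by
    rw [← Nat.card_congr (MonoidHom.ofInjective ofSubtype_injective).toEquiv, Nat.card_perm]
    simp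
  calc (Fintype.card α - s.card)! = L.relIndex K := by
        rw [← card_K, ← Subgroup.inf_relIndex_right, disjoint_LK, Subgroup.relIndex_bot_left]
    _ ≤ L.relIndex ⊤ := Subgroup.relIndex_le_of_le_right le_top (by
        rw [Subgroup.relIndex_top_right]; exact Subgroup.index_ne_zero_of_finite)
    _ = L.index := Subgroup.relIndex_top_right L

variable [DecidableEq α]

theorem isThreeCycle_commutator {g h : Perm α} {a : α} (hg : g a ≠ a) (hh : h a ≠ a)
    (hgh : ∀ z ≠ a, g z = z ∨ h z = z) : IsThreeCycle ⁅g, h⁆ := by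
  have injg {x y : α} : g x = g y ↔ x = y := g.injective.eq_iff
  have injh {x y : α} : h x = h y ↔ x = y := h.injective.eq_iff
  have h_fix : h (g a) = g a := (hgh (g a) hg).resolve_left fun hga => hg (injg.1 hga)
  have g_fix : g (h a) = h a := (hgh (h a) hh).resolve_right fun hha => hh (injh.1 hha)
  have g_ne_h : g a ≠ h a := fun hga => hh (injh.1 (hga ▸ h_fix))
  have eq_swaps : ⁅g, h⁆ = swap a (h a) * swap a (g a) := by
    rw [commutatorElement_def, mul_inv_eq_iff_eq_mul, mul_inv_eq_iff_eq_mul]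
    ext z
    simp only [Perm.mul_apply, swap_apply_def]
    grind
  rw [eq_swaps]
  exact isThreeCycle_swap_mul_swap_same hh.symm hg.symm g_ne_h.symm

-- Bochert's bound: if a base of minimal size occupied more than half of the points, its
-- complement would contain no base, and two elements of `L` would share exactly one moved point.
theorem factorial_le_index_of_isPreprimitive {L : Subgroup (Perm α)} [IsPreprimitive L α]
    (hL : ¬ alternatingGroup α ≤ L) : ((Fintype.card α + 1) / 2)! ≤ L.index := by
  let IsBase (s : Finset α) : Prop := ∀ g ∈ L, (∀ x ∈ s, g x = x) → g = 1
  have base_univ : IsBase Finset.univ := fun g _ hg => Perm.ext fun x => hg x (Finset.mem_univ x)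
  obtain ⟨s, hs, hmin⟩ : ∃ s, IsBase s ∧ ∀ t, IsBase t → s.card ≤ t.card :=
    Set.exists_min_image {s | IsBase s} Finset.card (Set.toFinite _) ⟨_, base_univ⟩
  have card_le : 2 * s.card ≤ Fintype.card α := by
    by_contra! card_lt
    have not_base_compl : ¬ IsBase sᶜ := fun h => by
      have := hmin _ h
      rw [Finset.card_compl] at this
      omega
    obtain ⟨g, hgL, hg, hg_one⟩ : ∃ g ∈ L, (∀ x ∈ sᶜ, g x = x) ∧ g ≠ 1 := by
      simpa [IsBase] using not_base_compl
    obtain ⟨a, ha⟩ : ∃ a, g a ≠ a := by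
      simpa [Perm.ext_iff] using hg_one
    have has : a ∈ s := by_contra fun h => ha (hg a (Finset.mem_compl.2 h))
    have not_base_erase : ¬ IsBase (s.erase a) := fun h =>
      (hmin _ h).not_gt (Finset.card_erase_lt_of_mem has)
    obtain ⟨h, hhL, hh, hh_one⟩ : ∃ h ∈ L, (∀ x ∈ s.erase a, h x = x) ∧ h ≠ 1 := by
      simpa [IsBase] using not_base_erase
    have hha : h a ≠ a := fun ha' => hh_one <| hs h hhL fun x hx => by
      rcases eq_or_ne x a with rfl | hxa
      · exact ha'
      · exact hh x (Finset.mem_erase.2 ⟨hxa, hx⟩)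
    have three_cycle : IsThreeCycle ⁅g, h⁆ := isThreeCycle_commutator ha hha fun z hza => by
      by_cases hz : z ∈ s
      · exact .inr (hh z (Finset.mem_erase.2 ⟨hza, hz⟩))
      · exact .inl (hg z (Finset.mem_compl.2 hz))
    exact hL <| alternatingGroup_le_of_isPreprimitive_of_isThreeCycle_mem ‹_› three_cycle
      (mul_mem (mul_mem (mul_mem hgL hhL) (inv_mem hgL)) (inv_mem hhL))
  exact (Nat.factorial_le (by omega)).trans (factorial_le_index_of_forall_fixing_eq_one hs)

end Bochert

theorem four_mul_lt_factorial {m : ℕ} (hm : 4 ≤ m) : 4 * m < m ! := by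
  induction m, hm using Nat.le_induction with
  | base => decide
  | succ m hm ih => rw [Nat.factorial_succ]; nlinarith

section TwoTransitive

variable {G α : Type*} [Group G] [MulAction G α]

theorem is_two_pretransitive_of_exists_smul_ne {x : α}
    (hx : ∀ b ≠ x, ∀ d ≠ x, ∃ g : G, g • x = x ∧ g • b = d) (hG : ∃ g : G, g • x ≠ x) :
    IsMultiplyPretransitive G α 2 := by
  have to_x (a : α) : ∃ g : G, g • a = x := by
    obtain ⟨g, hg⟩ := hG
    rcases eq_or_ne a x with rfl | ha
    · exact ⟨1, one_smul G a⟩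
    · obtain ⟨k, -, hk⟩ := hx a ha _ hg
      exact ⟨g⁻¹ * k, by rw [mul_smul, hk, inv_smul_smul]⟩
  rw [is_two_pretransitive_iff]
  intro a b c d hab hcd
  obtain ⟨k, hk⟩ := to_x a
  obtain ⟨l, hl⟩ := to_x c
  obtain ⟨g, hgx, hg⟩ := hx (k • b) (fun h => hab (smul_left_cancel k (hk.trans h.symm)))
    (l • d) (fun h => hcd (smul_left_cancel l (hl.trans h.symm)))
  refine ⟨l⁻¹ * g * k, ?_, ?_⟩
  · rw [mul_smul, mul_smul, hk, hgx, ← hl, inv_smul_smul]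
  · rw [mul_smul, mul_smul, hg, inv_smul_smul]

theorem stabilizer_injective_of_is_two_pretransitive [Finite α] [IsMultiplyPretransitive G α 2]
    (hα : 3 ≤ Nat.card α) : Function.Injective (stabilizer G : α → Subgroup G) := by
  intro x y hxy
  by_contra hne
  obtain ⟨z, hz⟩ : ∃ z, z ∉ ({x, y} : Set α) := by
    by_contra! h
    have := Set.ncard_pair hne
    rw [Set.eq_univ_of_forall h, Set.ncard_univ] at this
    omega
  simp only [Set.mem_insert_iff, Set.mem_singleton_iff, not_or] at hz
  obtain ⟨g, hgx, hgy⟩ := is_two_pretransitive_iff.1 ‹IsMultiplyPretransitive G α 2›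
    hne (Ne.symm hz.1)
  have : g ∈ stabilizer G y := hxy ▸ hgx
  exact hz.2 (hgy.symm.trans this)

end TwoTransitive

theorem eq_one_or_injective_of_isSimpleGroup_s9 {G N : Type*} [Group G] [IsSimpleGroup G]
    [Group N] (ψ : G →* N) : ψ = 1 ∨ Function.Injective ψ := by
  rcases ψ.normal_ker.eq_bot_or_eq_top with h | h
  · exact .inr ((MonoidHom.ker_eq_bot_iff ψ).1 h)
  · exact .inl (MonoidHom.ker_eq_top_iff.1 h)

section Rigidity

variable {α : Type*} [Fintype α] [DecidableEq α]

theorem eq_top_of_is_two_pretransitive_of_index_le {K : Subgroup (alternatingGroup α)}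
    (hα : 7 ≤ Fintype.card α) [IsMultiplyPretransitive K α 2] (hK : K.index ≤ Fintype.card α) :
    K = ⊤ := by
  let L : Subgroup (Perm α) := K.map (alternatingGroup α).subtype
  have : IsMultiplyPretransitive L α 2 := by
    rw [is_two_pretransitive_iff]
    intro a b c d hab hcd
    obtain ⟨k, hk⟩ := is_two_pretransitive_iff.1 ‹IsMultiplyPretransitive K α 2› hab hcd
    exact ⟨⟨k, Subgroup.mem_map_of_mem _ k.2⟩, hk⟩
  have : IsPreprimitive L α := isPreprimitive_of_is_two_pretransitive this
  have : Nontrivial α := Fintype.one_lt_card_iff_nontrivial.1 (by omega)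
  have index_L : L.index = K.index * 2 := by
    rw [Subgroup.index_map_subtype, alternatingGroup.index_eq_two]
  have alternating_le : alternatingGroup α ≤ L := by
    by_contra hL
    have bochert := factorial_le_index_of_isPreprimitive hL
    have := four_mul_lt_factorial (m := (Fintype.card α + 1) / 2) (by omega)
    omega
  rw [eq_top_iff]
  intro k _
  obtain ⟨l, hl, hlk⟩ := alternating_le k.2
  rwa [← Subtype.ext hlk]

variable {H : Subgroup (alternatingGroup α)} [IsMultiplyPretransitive H α 2]

theorem map_stabilizer_eq_of_forall_apply_eq (hα : 7 ≤ Fintype.card α)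
    {θ : alternatingGroup α ≃* alternatingGroup α} (hθ : ∀ h ∈ H, θ h = h) (x : α) :
    (stabilizer (alternatingGroup α) x).map θ.toMonoidHom = stabilizer (alternatingGroup α) x := by
  set S := stabilizer (alternatingGroup α) x
  have index_map : (S.map θ.toMonoidHom).index = S.index := Subgroup.index_map_equiv S θ
  have index_le : S.index ≤ Fintype.card α := by
    rw [index_stabilizer, ← Nat.card_eq_fintype_card]
    exact Set.ncard_le_card _
  have map_le : S.map θ.toMonoidHom ≤ S := by
    by_contra hle
    have : IsMultiplyPretransitive (S.map θ.toMonoidHom) α 2 := by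
      refine is_two_pretransitive_of_exists_smul_ne (x := x) (fun b hb d hd => ?_) ?_
      · obtain ⟨h, hx, hbd⟩ := is_two_pretransitive_iff.1 ‹IsMultiplyPretransitive H α 2›
          hb.symm hd.symm
        exact ⟨⟨h, h, hx, hθ h h.2⟩, hx, hbd⟩
      · obtain ⟨k, hk, hkx⟩ := SetLike.not_le_iff_exists.1 hle
        exact ⟨⟨k, hk⟩, hkx⟩
    have map_top := eq_top_of_is_two_pretransitive_of_index_le hα (index_map ▸ index_le)
    have S_top : S = ⊤ := by rw [← Subgroup.index_eq_one, ← index_map, map_top, Subgroup.index_top]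
    have : Nontrivial α := Fintype.one_lt_card_iff_nontrivial.1 (by omega)
    obtain ⟨y, hy⟩ := exists_ne x
    obtain ⟨h, hx, -⟩ := is_two_pretransitive_iff.1 ‹IsMultiplyPretransitive H α 2› hy.symm hy
    have : (h : alternatingGroup α) ∈ S := S_top ▸ Subgroup.mem_top _
    exact hy (hx.symm.trans this)
  exact Subgroup.eq_of_le_of_card_ge map_le (Subgroup.card_map_of_injective θ.injective).ge

theorem eq_refl_of_forall_apply_eq (hα : 7 ≤ Fintype.card α)
    {θ : alternatingGroup α ≃* alternatingGroup α} (hθ : ∀ h ∈ H, θ h = h) :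
    θ = MulEquiv.refl _ := by
  ext g x
  have hS := map_stabilizer_eq_of_forall_apply_eq hα hθ
  have : IsMultiplyPretransitive (alternatingGroup α) α 2 :=
    is_two_pretransitive_iff.2 fun hab hcd =>
      let ⟨h, hh⟩ := is_two_pretransitive_iff.1 ‹IsMultiplyPretransitive H α 2› hab hcd
      ⟨h, hh⟩
  have stab_inj := stabilizer_injective_of_is_two_pretransitive (G := alternatingGroup α) (α := α)
    (by rw [Nat.card_eq_fintype_card]; omega)
  have : stabilizer (alternatingGroup α) (θ g • x) = stabilizer (alternatingGroup α) (g • x) := by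
    rw [← hS (g • x), stabilizer_smul_eq_stabilizer_map_conj,
      stabilizer_smul_eq_stabilizer_map_conj, Subgroup.map_map, ← hS x, Subgroup.map_map, hS x]
    congr 1
    ext; simp
  exact stab_inj this

theorem comp_injective_of_range_is_two_pretransitive {Γ : Type*} [Group Γ]
    {f : Γ →* alternatingGroup α} (hα : 7 ≤ Fintype.card α)
    [IsMultiplyPretransitive f.range α 2] :
    Function.Injective fun ψ : alternatingGroup α →* alternatingGroup α => ψ.comp f := by
  have : IsSimpleGroup (alternatingGroup α) :=
    alternatingGroup.isSimpleGroup (by rw [Nat.card_eq_fintype_card]; omega)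
  have f_ne_one : f ≠ 1 := by
    rintro rfl
    have : Nontrivial α := Fintype.one_lt_card_iff_nontrivial.1 (by omega)
    obtain ⟨a, b, hab⟩ := exists_pair_ne α
    obtain ⟨⟨_, x, rfl⟩, hx, -⟩ := is_two_pretransitive_iff.1
      ‹IsMultiplyPretransitive (MonoidHom.range _) α 2› hab hab.symm
    exact hab hx
  have comp_eq_one {ψ : alternatingGroup α →* alternatingGroup α} (h : ψ.comp f = 1) : ψ = 1 := by
    refine (eq_one_or_injective_of_isSimpleGroup_s9 ψ).resolve_right fun inj => f_ne_one ?_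
    ext1 x
    exact inj ((DFunLike.congr_fun h x).trans (map_one ψ).symm)
  intro ψ₁ ψ₂ h
  rcases eq_one_or_injective_of_isSimpleGroup_s9 ψ₁ with rfl | inj₁
  · exact (comp_eq_one h.symm).symm
  rcases eq_one_or_injective_of_isSimpleGroup_s9 ψ₂ with rfl | inj₂
  · exact comp_eq_one h
  let θ₁ := MulEquiv.ofBijective ψ₁ (Finite.injective_iff_bijective.1 inj₁)
  let θ₂ := MulEquiv.ofBijective ψ₂ (Finite.injective_iff_bijective.1 inj₂)
  have hθ : θ₁.trans θ₂.symm = MulEquiv.refl _ := by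
    refine eq_refl_of_forall_apply_eq (H := f.range) hα ?_
    rintro _ ⟨x, rfl⟩
    exact (θ₂.symm_apply_eq).2 (DFunLike.congr_fun h x)
  ext1 y
  exact θ₂.symm_apply_eq.1 (DFunLike.congr_fun hθ y)

theorem isLocalizationHom_of_forall_conj {Γ : Type*} [Group Γ] {f : Γ →* alternatingGroup α}
    (hα : 7 ≤ Fintype.card α) [IsMultiplyPretransitive f.range α 2]
    (hconj : ∀ g : Γ →* alternatingGroup α, g ≠ 1 →
      ∃ σ : Perm α, ∀ x, (g x : Perm α) = σ * f x * σ⁻¹) :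
    IsLocalizationHom f := by
  refine ⟨comp_injective_of_range_is_two_pretransitive hα, fun g => ?_⟩
  rcases eq_or_ne g 1 with rfl | hg
  · exact ⟨1, rfl⟩
  · obtain ⟨σ, hσ⟩ := hconj g hg
    refine ⟨(MulAut.conjNormal σ).toMonoidHom, ?_⟩
    ext1 x
    exact Subtype.ext (hσ x).symm

end Rigidity

section UniqueAction

variable {Γ P α : Type*} [Group Γ] [MulAction Γ P]

theorem exists_equiv_of_stabilizer_eq [MulAction Γ α] [Finite α] [IsPretransitive Γ P]
    (hcard : Nat.card α = Nat.card P) {a : α} {y : P} (h : stabilizer Γ a = stabilizer Γ y) :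
    ∃ e : α ≃ P, ∀ (γ : Γ) (b : α), e (γ • b) = γ • e b := by
  have orbit_a : orbit Γ a = Set.univ := by
    rw [Set.eq_univ_iff_ncard, ← index_stabilizer, h, index_stabilizer_of_transitive, hcard]
  have : IsPretransitive Γ α := (isPretransitive_iff_orbit_eq_univ a).2 orbit_a
  have smul_eq_iff (γ δ : Γ) : γ • a = δ • a ↔ γ • y = δ • y := by
    simp only [← inv_smul_eq_iff (g := δ), smul_smul]
    exact SetLike.ext_iff.1 h (δ⁻¹ * γ)
  choose τ hτ using exists_smul_eq Γ a
  have τ_smul (γ : Γ) : τ (γ • a) • y = γ • y := (smul_eq_iff _ _).1 (hτ _)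
  refine ⟨Equiv.ofBijective (fun b => τ b • y) ⟨fun b c hbc => ?_, fun z => ?_⟩, fun γ b => ?_⟩
  · rw [← hτ b, ← hτ c, smul_eq_iff]
    exact hbc
  · obtain ⟨γ, rfl⟩ := exists_smul_eq Γ y z
    exact ⟨γ • a, τ_smul γ⟩
  · change τ (γ • b) • y = γ • τ b • y
    rw [smul_smul, ← τ_smul (γ * τ b), mul_smul, hτ]

theorem exists_equiv_of_ne_one [Finite α] [IsPretransitive Γ P] (hcard : Nat.card α = Nat.card P)
    (hΓ : ∀ M : Subgroup Γ, M ≠ ⊤ → M.index ≤ Nat.card P → ∃ y : P, M = stabilizer Γ y)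
    {f : Γ →* Perm α} (hf : f ≠ 1) : ∃ e : α ≃ P, ∀ γ a, e (f γ a) = γ • e a := by
  let _ : MulAction Γ α := MulAction.compHom α f
  obtain ⟨γ, a, ha⟩ : ∃ γ a, f γ a ≠ a := by
    by_contra! h
    exact hf (MonoidHom.ext fun γ => Perm.ext (h γ))
  have stab_ne_top : stabilizer Γ a ≠ ⊤ := fun h => ha (h ▸ Subgroup.mem_top γ : γ ∈ stabilizer Γ a)
  have index_le : (stabilizer Γ a).index ≤ Nat.card P := by
    rw [index_stabilizer, ← hcard]
    exact Set.ncard_le_card _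
  obtain ⟨y, hy⟩ := hΓ _ stab_ne_top index_le
  exact exists_equiv_of_stabilizer_eq hcard hy

variable [Fintype α] [DecidableEq α]

theorem isLocalizationHom_of_ne_one [IsMultiplyPretransitive Γ P 2]
    (hα : 7 ≤ Fintype.card α) (hcard : Nat.card α = Nat.card P)
    (hΓ : ∀ M : Subgroup Γ, M ≠ ⊤ → M.index ≤ Nat.card P → ∃ y : P, M = stabilizer Γ y)
    {f : Γ →* alternatingGroup α} (hf : f ≠ 1) : IsLocalizationHom f := by
  have : IsPretransitive Γ P := isPretransitive_of_is_two_pretransitive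
  have exists_equiv {g : Γ →* alternatingGroup α} (hg : g ≠ 1) :
      ∃ e : α ≃ P, ∀ γ a, e ((g γ : Perm α) a) = γ • e a :=
    exists_equiv_of_ne_one (f := (alternatingGroup α).subtype.comp g) hcard hΓ fun h =>
      hg (MonoidHom.ext fun γ => Subtype.ext (DFunLike.congr_fun h γ))
  obtain ⟨e, he⟩ := exists_equiv hf
  have : IsMultiplyPretransitive f.range α 2 := by
    refine is_two_pretransitive_iff.2 fun {a b c d} hab hcd => ?_
    obtain ⟨γ, hac, hbd⟩ := is_two_pretransitive_iff.1 ‹IsMultiplyPretransitive Γ P 2›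
      (e.injective.ne hab) (e.injective.ne hcd)
    exact ⟨⟨f γ, γ, rfl⟩, e.injective ((he γ a).trans hac), e.injective ((he γ b).trans hbd)⟩
  refine isLocalizationHom_of_forall_conj hα fun g hg => ?_
  obtain ⟨e', he'⟩ := exists_equiv hg
  refine ⟨e.trans e'.symm, fun γ => ?_⟩
  rw [eq_mul_inv_iff_mul_eq]
  ext a
  apply e'.injective
  simp [he, he']

end UniqueAction

section Arithmetic

-- In this section `d` is the order of the center of `SL(2, q)`, `m` the index of a subgroup that
-- contains the center and is transitive on the projective line, `u` and `u * t` the orders of its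
-- pointwise and setwise stabilizers of a line, `g` the order of its image in `PSL(2, q)`, and
-- `A + 1` the number of its orbits on the points defined over `𝔽_{q²}` but not over `𝔽_q`.

theorem eq_one_and_dvd_or_eq_two_of_mul_eq {q u e t d m A : ℕ} (hq : q = u * (e + 1))
    (he : 0 < e) (hd : d = 1 ∨ d = 2) (ht : t ∣ q - 1) (hq1 : 1 < q) (hm : m ≤ q + 1)
    (hmt : m * t = (e + 1) * (q - 1)) (hA : A * t = d * e) :
    A = 1 ∧ e ∣ u - 1 ∨ A = 2 ∧ u = 1 := by
  have coprime_t {c : ℕ} (hc : c ∣ q) : Nat.Coprime c t :=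
    ((Nat.coprime_self_sub_right hq1.le).2 (Nat.coprime_one_right q)).coprime_dvd_left hc
      |>.coprime_dvd_right ht
  obtain ⟨m', rfl⟩ : e + 1 ∣ m :=
    (coprime_t ⟨u, by rw [hq, mul_comm]⟩).dvd_of_dvd_mul_right ⟨q - 1, hmt⟩
  have hm't : m' * t = q - 1 := by
    rw [mul_assoc] at hmt
    exact Nat.eq_of_mul_eq_mul_left e.succ_pos hmt
  have hA0 : A ≠ 0 := by rintro rfl; rcases hd with rfl | rfl <;> omega
  have hm'u : m' ≤ u := by by_contra!; nlinarith
  rcases hm'u.eq_or_lt with rfl | hlt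
  · have hu : m' = 1 := by
      have h1 : m' ∣ q - 1 := ⟨t, hm't.symm⟩
      have h2 : m' ∣ q := ⟨e + 1, hq⟩
      exact Nat.dvd_one.1 ((Nat.dvd_sub_iff_right hq1.le h2).1 h1)
    subst hu
    obtain rfl : t = e := by omega
    obtain rfl : A = d := Nat.eq_of_mul_eq_mul_right he hA
    rcases hd with rfl | rfl <;> simp
  · have het : e < t := by
      by_contra! hte
      have : m' * t ≤ (u - 1) * e := Nat.mul_le_mul (by omega) hte
      obtain ⟨v, rfl⟩ : ∃ v, u = v + 1 := ⟨u - 1, by omega⟩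
      simp only [Nat.add_sub_cancel] at this
      have : q = v * e + v + e + 1 := by rw [hq]; ring
      omega
    have hAd : A < d := by
      by_contra! hdA
      have : d * e < d * t := Nat.mul_lt_mul_of_pos_left het (by omega)
      have : d * t ≤ A * t := Nat.mul_le_mul_right t hdA
      omega
    obtain ⟨rfl, rfl⟩ : A = 1 ∧ d = 2 := by omega
    refine .inl ⟨rfl, ?_⟩
    have he_dvd : e ∣ q - 1 := Dvd.dvd.trans ⟨2, by omega⟩ ht
    have : q - 1 = e * u + (u - 1) := by rw [hq, mul_add, mul_comm u e]; omega
    rw [this] at he_dvd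
    exact (Nat.dvd_add_right (dvd_mul_right e u)).1 he_dvd

theorem eq_or_two_mul_eq_or_three_mul_le_of_dvd {a g : ℕ} (hg : g ≠ 0) (ha : a ∣ g) :
    a = g ∨ 2 * a = g ∨ 3 * a ≤ g := by
  obtain ⟨c, rfl⟩ := ha
  rcases (by omega : c = 0 ∨ c = 1 ∨ c = 2 ∨ 3 ≤ c) with rfl | rfl | rfl | hc
  · simp at hg
  · simp
  · right; left; ring
  · right; right; nlinarith

theorem eq_four_or_eq_nine_of_dvd_of_add_eq {q u e b : ℕ} (hq : q = u * (e + 1)) (he : 0 < e)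
    (hu : 1 < u) (heu : e ∣ u - 1) (hb : b ∣ (q + 1) * (u * e))
    (hsum : (q + 1) * (u * e) + b + q = q ^ 2) : q = 4 ∨ q = 9 := by
  obtain ⟨s, hs⟩ := heu
  obtain rfl : u = e * s + 1 := by omega
  have hs0 : 0 < s := Nat.pos_of_ne_zero (by rintro rfl; omega)
  obtain ⟨w, hw⟩ : ∃ w, w + 1 = (e + 1) * s :=
    ⟨(e + 1) * s - 1, Nat.sub_add_cancel (by nlinarith)⟩
  have hq_eq : q = e * w + 2 * e + 1 := by rw [hq]; zify at hw ⊢; linear_combination (-e:ℤ) * hw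
  have hb_eq : (e * s + 1) * e * w = b := by
    zify at *
    linear_combination (1 - q : ℤ) * hq - (e * s + 1 : ℤ) * hq_eq - hsum
  have hw_dvd : w ∣ q + 1 := by
    rw [← hb_eq, mul_comm (q + 1)] at hb
    exact Nat.dvd_of_mul_dvd_mul_left (by positivity) hb
  have hw_dvd_two : w ∣ 2 := by
    have h : (q + 1) * s = w * (e * s + 2) + 2 := by
      rw [hq_eq]; zify at hw ⊢; linear_combination (-2 : ℤ) * hw
    exact (Nat.dvd_add_right (dvd_mul_right _ _)).1 (h ▸ hw_dvd.mul_right s)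
  have hw0 : w ≠ 0 := by rintro rfl; nlinarith
  have hw2 : w ≤ 2 := Nat.le_of_dvd two_pos hw_dvd_two
  have he2 : e ≤ 2 := by nlinarith
  interval_cases w <;> interval_cases e <;> omega

theorem add_add_ne_sq_of_dvd {q u e g a b : ℕ} (hq8 : 13 ≤ q ∨ q = 8) (hq : q = u * (e + 1))
    (he : 0 < e) (heu : e ∣ u - 1) (hg : g = (q + 1) * (u * e)) (ha : a ∣ g) (hb : b ∣ g) :
    a + b + q ≠ q ^ 2 := by
  intro hsum
  have hu0 : 0 < u := Nat.pos_of_ne_zero (by rintro rfl; omega)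
  have hg0 : g ≠ 0 := by rw [hg]; positivity
  have hue : u * e + u = q := by rw [hq]; ring
  have hq_sq : 8 * q ≤ q ^ 2 := by nlinarith only [hq8.elim (by omega) (by omega : _ → 8 ≤ q)]
  have ha' := eq_or_two_mul_eq_or_three_mul_le_of_dvd hg0 ha
  have hb' := eq_or_two_mul_eq_or_three_mul_le_of_dvd hg0 hb
  rcases Nat.eq_or_lt_of_le hu0 with rfl | hu1
  · have : g + 1 = q ^ 2 := by rw [hg, ← hue]; ring
    omega
  · have ne_g {a b : ℕ} (hb : b ∣ g) (hsum : a + b + q = q ^ 2) : a ≠ g := by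
      rintro rfl
      have := eq_four_or_eq_nine_of_dvd_of_add_eq hq he hu1 heu (hg ▸ hb) (hg ▸ hsum)
      omega
    have := ne_g hb hsum
    have := ne_g ha (by rwa [add_comm b a])
    have : g + q < q ^ 2 := by nlinarith
    omega

theorem add_add_add_ne_sq_of_dvd_of_two_mul_eq {q g b c : ℕ} (hq : 13 ≤ q ∨ q = 8)
    (hg : 2 * g + 1 = q ^ 2) (hb : 2 * b = g) (hc : c ∣ g) : g + b + c + q ≠ q ^ 2 := by
  intro hsum
  obtain ⟨r, rfl⟩ : ∃ r, q = r + 3 := ⟨q - 3, by omega⟩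
  obtain ⟨k, rfl⟩ := hc
  have hrk : r * k = 2 * (r + 4) := by
    have hc4 : 4 * c = (r + 2) * r := by nlinarith
    have : (r + 2) * (r * k) = (r + 2) * (2 * (r + 4)) := by
      rw [← mul_assoc, ← hc4]; nlinarith
    exact Nat.eq_of_mul_eq_mul_left (by omega) this
  rcases (by omega : k ≤ 2 ∨ 3 ≤ k) with hk | hk
  · nlinarith
  · rcases hq with hq | hq
    · nlinarith
    · obtain rfl : r = 5 := by omega
      omega

theorem add_add_add_ne_sq_of_dvd {q g a b c : ℕ} (hq : 13 ≤ q ∨ q = 8) (hg : 2 * g + 1 = q ^ 2)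
    (ha : a ∣ g) (hb : b ∣ g) (hc : c ∣ g) : a + b + c + q ≠ q ^ 2 := by
  intro hsum
  have hq_sq : 8 * q ≤ q ^ 2 := by nlinarith only [hq.elim (by omega) (by omega : _ → 8 ≤ q)]
  have not_half {a b c : ℕ} (ha : a = g) (hb : 2 * b = g) (hc : c ∣ g) :
      a + b + c + q ≠ q ^ 2 :=
    ha ▸ add_add_add_ne_sq_of_dvd_of_two_mul_eq hq hg hb hc
  have hg0 : g ≠ 0 := by omega
  rcases eq_or_two_mul_eq_or_three_mul_le_of_dvd hg0 ha with ha' | ha' | ha' <;>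
    rcases eq_or_two_mul_eq_or_three_mul_le_of_dvd hg0 hb with hb' | hb' | hb' <;>
    rcases eq_or_two_mul_eq_or_three_mul_le_of_dvd hg0 hc with hc' | hc' | hc' <;>
  first
  | omega
  | exact not_half ha' hb' hc (by omega)
  | exact not_half ha' hc' hb (by omega)
  | exact not_half hb' ha' hc (by omega)
  | exact not_half hb' hc' ha (by omega)
  | exact not_half hc' ha' hb (by omega)
  | exact not_half hc' hb' ha (by omega)

theorem sum_add_ne_sq_of_forall_dvd {ι : Type*} [Fintype ι] {s : ι → ℕ} {q u e t d m g : ℕ}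
    (hq8 : 13 ≤ q ∨ q = 8) (hq : q = u * (e + 1)) (he : 0 < e) (hd : d = 1 ∨ d = 2)
    (ht : t ∣ q - 1) (hm : m ≤ q + 1) (hmt : m * t = (e + 1) * (q - 1)) {A : ℕ}
    (hA : A * t = d * e) (hAg : A * g = (q + 1) * (u * e)) (hι : Fintype.card ι = A + 1)
    (hs : ∀ i, s i ∣ g) : ∑ i, s i + q ≠ q ^ 2 := by
  classical
  rcases eq_one_and_dvd_or_eq_two_of_mul_eq hq he hd ht (by omega) hm hmt hA with
    ⟨rfl, heu⟩ | ⟨rfl, rfl⟩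
  · obtain ⟨i, j, hij, huniv⟩ := Finset.card_eq_two.1 (Finset.card_univ.trans hι)
    rw [huniv, Finset.sum_pair hij]
    exact add_add_ne_sq_of_dvd hq8 hq he heu (by omega) (hs i) (hs j)
  · obtain ⟨i, j, k, hij, hik, hjk, huniv⟩ := Finset.card_eq_three.1 (Finset.card_univ.trans hι)
    rw [huniv, Finset.sum_insert (by simp [hij, hik]), Finset.sum_pair hjk, ← add_assoc]
    exact add_add_add_ne_sq_of_dvd hq8 (by nlinarith) (hs i) (hs j) (hs k)

end Arithmetic

section LineCharacter

variable {G K V : Type*} [Group G] [Field K] [AddCommGroup V] [Module K V]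
  [DistribMulAction G V] [SMulCommClass G K V]

theorem smul_eq_self_iff_exists_smul_rep {g : G} {x : ℙ K V} :
    g • x = x ↔ ∃ r : K, g • x.rep = r • x.rep := by
  conv_lhs => rw [← x.mk_rep, Projectivization.smul_mk, Projectivization.mk_eq_mk_iff']
  simp only [eq_comm]

theorem exists_hom_smul_rep_eq (x : ℙ K V) :
    ∃ χ : stabilizer G x →* Kˣ, ∀ g, (χ g : K) • x.rep = (g : G) • x.rep := by
  choose r hr using fun g : stabilizer G x => smul_eq_self_iff_exists_smul_rep.1 g.2
  have r_unique {a b : K} (h : a • x.rep = b • x.rep) : a = b :=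
    smul_left_injective K x.rep_nonzero h
  let χ : stabilizer G x →* K :=
    { toFun := r
      map_one' := r_unique <| by rw [← hr, one_smul, Subgroup.coe_one, one_smul]
      map_mul' := fun g h => r_unique <| by
        rw [← hr, Subgroup.coe_mul, mul_smul, hr h, smul_comm, hr g, smul_smul, mul_comm] }
  exact ⟨χ.toHomUnits, fun g => (hr g).symm⟩

/-- The character through which the stabilizer of a projective point `x` acts on the line `x`. -/
noncomputable def lineCharacter (x : ℙ K V) : stabilizer G x →* Kˣ :=
  (exists_hom_smul_rep_eq x).choose

theorem lineCharacter_smul_rep {x : ℙ K V} (g : stabilizer G x) :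
    (lineCharacter x g : K) • x.rep = (g : G) • x.rep :=
  (exists_hom_smul_rep_eq x).choose_spec g

theorem lineCharacter_eq_iff {x : ℙ K V} {g : stabilizer G x} {r : K} :
    (lineCharacter x g : K) = r ↔ (g : G) • x.rep = r • x.rep := by
  rw [← lineCharacter_smul_rep, (smul_left_injective K x.rep_nonzero).eq_iff]

end LineCharacter

section Eigenvalue

variable {K : Type*} [Field K]

theorem mem_center_iff_apply {g : SL(2, K)} :
    g ∈ Subgroup.center SL(2, K) ↔ g 0 1 = 0 ∧ g 1 0 = 0 ∧ g 0 0 = g 1 1 := by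
  rw [Matrix.SpecialLinearGroup.mem_center_iff]
  constructor
  · rintro ⟨r, -, hr⟩
    simp [← hr]
  · rintro ⟨h01, h10, h00⟩
    have det_eq := g.det_coe
    rw [Matrix.det_fin_two, h01, ← h00] at det_eq
    refine ⟨g 0 0, by rw [Fintype.card_fin]; linear_combination det_eq, ?_⟩
    ext i j
    fin_cases i <;> fin_cases j <;> simp [h01, h10, h00]

theorem exists_smul_eq_smul_iff {g : SL(2, K)} {r : K} :
    (∃ v : Fin 2 → K, v ≠ 0 ∧ g • v = r • v) ↔ r ^ 2 - g.1.trace * r + 1 = 0 := by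
  have det_eq : (g.1 - Matrix.scalar (Fin 2) r).det = r ^ 2 - g.1.trace * r + 1 := by
    have := g.det_coe
    rw [Matrix.det_fin_two] at this
    simp only [Matrix.det_fin_two, Matrix.trace_fin_two, Matrix.sub_apply, Matrix.scalar_apply,
      Matrix.diagonal_apply_eq, Matrix.diagonal_apply_ne _ zero_ne_one,
      Matrix.diagonal_apply_ne _ one_ne_zero]
    linear_combination this
  rw [← det_eq, ← Matrix.exists_mulVec_eq_zero_iff]
  simp only [Matrix.sub_mulVec, sub_eq_zero, Matrix.scalar_apply, Matrix.diagonal_const_mulVec]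
  rfl

theorem mem_span_singleton_iff_mul_eq_mul {v w : Fin 2 → K} (hv : v ≠ 0) :
    w ∈ Submodule.span K {v} ↔ v 0 * w 1 = v 1 * w 0 := by
  rw [Submodule.mem_span_singleton]
  refine ⟨?_, fun h => ?_⟩
  · rintro ⟨c, rfl⟩
    simp only [Pi.smul_apply, smul_eq_mul]
    ring
  · obtain ⟨i, hi⟩ := Function.ne_iff.1 hv
    refine ⟨w i / v i, funext fun j => ?_⟩
    simp only [Pi.smul_apply, smul_eq_mul, Pi.zero_apply] at hi ⊢
    rw [div_mul_eq_mul_div, div_eq_iff hi]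
    fin_cases i <;> fin_cases j <;> grind

theorem mk_eq_mk_iff_mul_eq_mul {v w : Fin 2 → K} (hv : v ≠ 0) (hw : w ≠ 0) :
    Projectivization.mk K v hv = Projectivization.mk K w hw ↔ v 0 * w 1 = v 1 * w 0 := by
  rw [eq_comm, Projectivization.mk_eq_mk_iff', ← Submodule.mem_span_singleton,
    mem_span_singleton_iff_mul_eq_mul hv]

theorem smul_apply_zero (g : SL(2, K)) (v : Fin 2 → K) :
    (g • v) 0 = g 0 0 * v 0 + g 0 1 * v 1 := by
  simp [Matrix.SpecialLinearGroup.smul_def, Matrix.mulVec, dotProduct, Fin.sum_univ_two]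

theorem smul_apply_one (g : SL(2, K)) (v : Fin 2 → K) :
    (g • v) 1 = g 1 0 * v 0 + g 1 1 * v 1 := by
  simp [Matrix.SpecialLinearGroup.smul_def, Matrix.mulVec, dotProduct, Fin.sum_univ_two]

theorem mem_center_of_smul_eq_smul {g : SL(2, K)} {r : K} {v w : Fin 2 → K}
    (hv : g • v = r • v) (hw : g • w = r • w) (hvw : v 0 * w 1 ≠ v 1 * w 0) :
    g ∈ Subgroup.center SL(2, K) := by
  have hv0 := congrFun hv 0
  have hv1 := congrFun hv 1
  have hw0 := congrFun hw 0
  have hw1 := congrFun hw 1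
  simp only [smul_apply_zero, smul_apply_one, Pi.smul_apply, smul_eq_mul] at hv0 hv1 hw0 hw1
  have cancel {a b : K} (h : (a - b) * (v 0 * w 1 - v 1 * w 0) = 0) : a = b :=
    sub_eq_zero.1 ((mul_eq_zero.1 h).resolve_right (sub_ne_zero.2 hvw))
  rw [mem_center_iff_apply]
  refine ⟨cancel ?_, cancel ?_, (cancel (b := r) ?_).trans (cancel (a := r) ?_)⟩
  · linear_combination v 0 * hw0 - w 0 * hv0
  · linear_combination w 1 * hv1 - v 1 * hw1
  · linear_combination w 1 * hv0 - v 1 * hw0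
  · linear_combination w 0 * hv1 - v 0 * hw1

theorem card_fixedBy_eq_card_roots {g : SL(2, K)} (hg : g ∉ Subgroup.center SL(2, K)) :
    Nat.card (fixedBy (ℙ K (Fin 2 → K)) g) =
      Nat.card {r : K // r ^ 2 - g.1.trace * r + 1 = 0} := by
  let eigenvalue (x : fixedBy (ℙ K (Fin 2 → K)) g) : K := lineCharacter x.1 ⟨g, x.2⟩
  have h_eigen (x) : g • x.1.rep = eigenvalue x • x.1.rep :=
    (lineCharacter_smul_rep (⟨g, x.2⟩ : stabilizer SL(2, K) x.1)).symm
  refine Nat.card_eq_of_bijective (fun x => ⟨eigenvalue x,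
    exists_smul_eq_smul_iff.1 ⟨_, x.1.rep_nonzero, h_eigen x⟩⟩) ⟨fun x y hxy => ?_, fun r => ?_⟩
  · have hxy : eigenvalue x = eigenvalue y := congrArg Subtype.val hxy
    refine Subtype.ext ?_
    rw [← x.1.mk_rep, ← y.1.mk_rep, mk_eq_mk_iff_mul_eq_mul]
    by_contra h
    exact hg (mem_center_of_smul_eq_smul (h_eigen x) (hxy ▸ h_eigen y) h)
  · obtain ⟨v, hv0, hv⟩ := exists_smul_eq_smul_iff.2 r.2
    have hfix : g • Projectivization.mk K v hv0 = Projectivization.mk K v hv0 := by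
      rw [Projectivization.smul_mk, Projectivization.mk_eq_mk_iff']
      exact ⟨r, hv.symm⟩
    refine ⟨⟨_, hfix⟩, Subtype.ext <| lineCharacter_eq_iff.2 ?_⟩
    obtain ⟨a, ha⟩ := Projectivization.exists_smul_eq_mk_rep K v hv0
    rw [← ha, smul_comm, hv, smul_comm]

theorem card_roots_eq_one {a : K} (ha : a ^ 2 = 4) :
    Nat.card {r : K // r ^ 2 - a * r + 1 = 0} = 1 := by
  obtain ⟨c, rfl, hc⟩ : ∃ c : K, a = 2 * c ∧ c ^ 2 = 1 := by
    rcases sq_eq_sq_iff_eq_or_eq_neg.1 (ha.trans (by norm_num : (4 : K) = 2 ^ 2)) with rfl | rfl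
    · exact ⟨1, by ring, by ring⟩
    · exact ⟨-1, by ring, by ring⟩
  refine Nat.card_eq_one_iff_exists.2 ⟨⟨c, by linear_combination -hc⟩, fun r => Subtype.ext ?_⟩
  exact sub_eq_zero.1 (pow_eq_zero_iff two_ne_zero |>.1 (by linear_combination r.2 + hc))

theorem card_roots_eq_two {a r : K} (ha : a ^ 2 ≠ 4) (hr : r ^ 2 - a * r + 1 = 0) :
    Nat.card {r : K // r ^ 2 - a * r + 1 = 0} = 2 := by
  have hne : r ≠ a - r := fun h => ha (by linear_combination -4 * hr + (2 * r - a) * h)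
  refine Nat.card_eq_two_iff.2 ⟨⟨r, hr⟩, ⟨a - r, by linear_combination hr⟩,
    fun h => hne (congrArg Subtype.val h), Set.eq_univ_of_forall fun s => ?_⟩
  have h : (s.1 - r) * (s.1 - (a - r)) = 0 := by linear_combination s.2 - hr
  rcases mul_eq_zero.1 h with h | h
  · exact .inl (Subtype.ext (sub_eq_zero.1 h))
  · exact .inr (Subtype.ext (sub_eq_zero.1 h))

theorem trace_sq_eq_four_iff {x : ℙ K (Fin 2 → K)} (g : stabilizer SL(2, K) x) :
    g.1.1.trace ^ 2 = 4 ↔ (lineCharacter x g : K) = 1 ∨ (lineCharacter x g : K) = -1 := by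
  have h := exists_smul_eq_smul_iff.1 ⟨_, x.rep_nonzero, (lineCharacter_smul_rep g).symm⟩
  rw [← sq_eq_one_iff]
  set r : K := ((lineCharacter x g : Kˣ) : K)
  set a := g.1.1.trace
  have key : r ^ 2 * (a ^ 2 - 4) = (r ^ 2 - 1) ^ 2 := by
    linear_combination (-a * r - r ^ 2 - 1) * h
  rw [← sub_eq_zero, ← sub_eq_zero (a := r ^ 2), ← pow_eq_zero_iff (a := r ^ 2 - 1) two_ne_zero,
    ← key, mul_eq_zero, or_iff_right (pow_ne_zero 2 (lineCharacter x g).ne_zero)]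

theorem card_fixedBy_eq_one {g : SL(2, K)} (hg : g ∉ Subgroup.center SL(2, K))
    (htr : g.1.trace ^ 2 = 4) : Nat.card (fixedBy (ℙ K (Fin 2 → K)) g) = 1 := by
  rw [card_fixedBy_eq_card_roots hg, card_roots_eq_one htr]

theorem card_fixedBy_eq_two {g : SL(2, K)} (hg : g ∉ Subgroup.center SL(2, K))
    (htr : g.1.trace ^ 2 ≠ 4) {r : K} (hr : r ^ 2 - g.1.trace * r + 1 = 0) :
    Nat.card (fixedBy (ℙ K (Fin 2 → K)) g) = 2 := by
  rw [card_fixedBy_eq_card_roots hg, card_roots_eq_two htr hr]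

end Eigenvalue

section Unipotent

variable {K : Type*} [Field K]

theorem mem_lineStab_submodule_iff {x : ℙ K (Fin 2 → K)} {g : SL(2, K)} :
    g ∈ lineStab x.submodule ↔ g • x.rep = x.rep := by
  rw [x.submodule_eq]
  refine ⟨Matrix.SpecialLinearGroup.lineStab_fix_of_span _ x.rep_nonzero g, fun h w => ?_⟩
  rw [mem_span_singleton_iff_mul_eq_mul x.rep_nonzero]
  have h0 := congrFun h 0
  have h1 := congrFun h 1
  have det_eq := g.det_coe
  rw [Matrix.det_fin_two] at det_eq
  simp only [smul_apply_zero, smul_apply_one, Pi.sub_apply] at h0 h1 ⊢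
  linear_combination (x.rep 0 * w 1 - x.rep 1 * w 0) * det_eq
    - (g 1 0 * w 0 + g 1 1 * w 1) * h0 + (g 0 0 * w 0 + g 0 1 * w 1) * h1

theorem mem_lineStab_iff_lineCharacter_eq_one {x : ℙ K (Fin 2 → K)} {g : stabilizer SL(2, K) x} :
    (g : SL(2, K)) ∈ lineStab x.submodule ↔ lineCharacter x g = 1 := by
  rw [mem_lineStab_submodule_iff, ← Units.val_inj, Units.val_one, lineCharacter_eq_iff, one_smul]

theorem lineStab_le_stabilizer (x : ℙ K (Fin 2 → K)) :
    lineStab x.submodule ≤ stabilizer SL(2, K) x := fun g hg =>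
  smul_eq_self_iff_exists_smul_rep.2 ⟨1, by rw [one_smul, mem_lineStab_submodule_iff.1 hg]⟩

theorem disjoint_center_lineStab (x : ℙ K (Fin 2 → K)) :
    Disjoint (Subgroup.center SL(2, K)) (lineStab x.submodule) := by
  rw [Subgroup.disjoint_def]
  intro g hg hgx
  obtain ⟨h01, h10, h00⟩ := mem_center_iff_apply.1 hg
  have hfix := mem_lineStab_submodule_iff.1 hgx
  have h11 : g 1 1 = 1 := by
    have h0 := congrFun hfix 0
    have h1 := congrFun hfix 1
    simp only [smul_apply_zero, smul_apply_one, h01, h10, h00] at h0 h1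
    by_contra h
    refine x.rep_nonzero (funext <| Fin.forall_fin_two.2 ⟨?_, ?_⟩)
    · exact (mul_eq_zero.1 (by linear_combination h0)).resolve_left (sub_ne_zero.2 h)
    · exact (mul_eq_zero.1 (by linear_combination h1)).resolve_left (sub_ne_zero.2 h)
  ext i j
  fin_cases i <;> fin_cases j <;> simp [h01, h10, h00, h11]

theorem eq_of_mem_lineStab_of_smul_eq {x y : ℙ K (Fin 2 → K)} {g : SL(2, K)}
    (hgx : g ∈ lineStab x.submodule) (hg : g ≠ 1) (hy : g • y = y) : y = x := by
  have hgc : g ∉ Subgroup.center SL(2, K) := fun h =>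
    hg (Subgroup.disjoint_def.1 (disjoint_center_lineStab x) h hgx)
  have htr : g.1.trace ^ 2 = 4 :=
    (trace_sq_eq_four_iff ⟨g, lineStab_le_stabilizer x hgx⟩).2
      (.inl (Units.val_eq_one.2 (mem_lineStab_iff_lineCharacter_eq_one.1 hgx)))
  obtain ⟨z, hz⟩ := Nat.card_eq_one_iff_exists.1 (card_fixedBy_eq_one hgc htr)
  exact congrArg Subtype.val
    ((hz ⟨y, hy⟩).trans (hz ⟨x, lineStab_le_stabilizer x hgx⟩).symm)

/-- The transvection `w ↦ w + t * (v 0 * w 1 - v 1 * w 0) • v`, which fixes `v`. -/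
def transvectionAlong (v : Fin 2 → K) (t : K) : SL(2, K) :=
  ⟨!![1 - t * v 0 * v 1, t * v 0 ^ 2; -(t * v 1 ^ 2), 1 + t * v 0 * v 1],
    by rw [Matrix.det_fin_two_of]; ring⟩

theorem transvectionAlong_smul_self (v : Fin 2 → K) (t : K) : transvectionAlong v t • v = v := by
  refine funext <| Fin.forall_fin_two.2 ⟨?_, ?_⟩
  · rw [smul_apply_zero]
    simp only [transvectionAlong, Matrix.of_apply, Matrix.cons_val]
    ring
  · rw [smul_apply_one]
    simp only [transvectionAlong, Matrix.of_apply, Matrix.cons_val]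
    ring

theorem transvectionAlong_injective {v : Fin 2 → K} (hv : v ≠ 0) :
    Function.Injective (transvectionAlong v) := by
  intro s t hst
  have h01 : s * v 0 ^ 2 = t * v 0 ^ 2 := congrArg (fun g : SL(2, K) => g 0 1) hst
  have h10 : -(s * v 1 ^ 2) = -(t * v 1 ^ 2) := congrArg (fun g : SL(2, K) => g 1 0) hst
  by_contra hne
  have sq_eq_zero {a : K} (h : (s - t) * a ^ 2 = 0) : a = 0 :=
    (pow_eq_zero_iff two_ne_zero).1 ((mul_eq_zero.1 h).resolve_left (sub_ne_zero.2 hne))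
  exact hv (funext <| Fin.forall_fin_two.2
    ⟨sq_eq_zero (by linear_combination h01), sq_eq_zero (by linear_combination -h10)⟩)

theorem exists_transvectionAlong_eq {v : Fin 2 → K} (hv : v ≠ 0) {g : SL(2, K)}
    (hg : g • v = v) : ∃ t, transvectionAlong v t = g := by
  have htr : (1 : K) ^ 2 - g.1.trace * 1 + 1 = 0 :=
    exists_smul_eq_smul_iff.1 ⟨v, hv, by rwa [one_smul]⟩
  rw [Matrix.trace_fin_two] at htr
  have h0 := congrFun hg 0
  have h1 := congrFun hg 1
  rw [smul_apply_zero] at h0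
  rw [smul_apply_one] at h1
  obtain ⟨t, h00, h01, h10⟩ : ∃ t, 1 - t * v 0 * v 1 = g 0 0 ∧ t * v 0 ^ 2 = g 0 1 ∧
      -(t * v 1 ^ 2) = g 1 0 := by
    by_cases hv0 : v 0 = 0
    · have hv1 : v 1 ≠ 0 := fun hv1 => hv (funext <| Fin.forall_fin_two.2 ⟨hv0, hv1⟩)
      exact ⟨-(g 1 0 / v 1 ^ 2), by grind, by grind, by grind⟩
    · exact ⟨g 0 1 / v 0 ^ 2, by grind, by grind, by grind⟩
  have h11 : 1 + t * v 0 * v 1 = g 1 1 := by linear_combination htr - h00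
  refine ⟨t, Subtype.ext ?_⟩
  simp only [transvectionAlong, h00, h01, h10, h11]
  exact (Matrix.eta_fin_two g.1).symm

theorem card_lineStab (x : ℙ K (Fin 2 → K)) : Nat.card (lineStab x.submodule) = Nat.card K := by
  refine (Nat.card_eq_of_bijective (fun t => ⟨transvectionAlong x.rep t,
    mem_lineStab_submodule_iff.2 (transvectionAlong_smul_self _ _)⟩)
    ⟨fun s t hst => ?_, fun g => ?_⟩).symm
  · exact transvectionAlong_injective x.rep_nonzero (congrArg Subtype.val hst)
  · obtain ⟨t, ht⟩ := exists_transvectionAlong_eq x.rep_nonzero (mem_lineStab_submodule_iff.1 g.2)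
    exact ⟨t, Subtype.ext ht⟩

end Unipotent

section Card

theorem card_specialLinearGroup_mul_card_units {n R : Type*} [DecidableEq n] [Fintype n]
    [Nonempty n] [CommRing R] :
    Nat.card (Matrix.SpecialLinearGroup n R) * Nat.card Rˣ = Nat.card (GL n R) := by
  let det : GL n R →* Rˣ := Matrix.GeneralLinearGroup.det
  have range_eq : Set.range (Matrix.SpecialLinearGroup.toGL (n := n) (R := R)) = det.ker :=
    Matrix.SpecialLinearGroup.range_toGL
  rw [← Nat.card_range_of_injective Matrix.SpecialLinearGroup.toGL_injective, range_eq,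
    ← det.ker.card_mul_index, Subgroup.index_ker,
    MonoidHom.range_eq_top.2 Matrix.GeneralLinearGroup.det_surjective, Subgroup.card_top]
  rfl

theorem card_specialLinearGroup_two (K : Type*) [Field K] [Finite K] :
    Nat.card SL(2, K) = (Nat.card K + 1) * (Nat.card K * (Nat.card K - 1)) := by
  have : Fintype K := Fintype.ofFinite K
  have one_lt : 1 < Nat.card K := Finite.one_lt_card
  have h := card_specialLinearGroup_mul_card_units (n := Fin 2) (R := K)
  rw [Nat.card_units, Matrix.card_GL_field, Fin.prod_univ_two] at h
  refine Nat.eq_of_mul_eq_mul_right (Nat.sub_pos_of_lt one_lt) (h.trans ?_)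
  simp only [Fintype.card_eq_nat_card, Fin.val_zero, Fin.val_one, pow_zero, pow_one]
  have h_sub_one : Nat.card K ^ 2 - 1 = (Nat.card K + 1) * (Nat.card K - 1) := Nat.sq_sub_sq _ 1
  have h_sub_self : Nat.card K ^ 2 - Nat.card K = Nat.card K * (Nat.card K - 1) := by
    rw [sq, Nat.mul_sub_one]
  rw [h_sub_one, h_sub_self]
  ring

theorem card_projectivization_fin_two (K : Type*) [Field K] [Finite K] :
    Nat.card (ℙ K (Fin 2 → K)) = Nat.card K + 1 :=
  Projectivization.card_of_finrank_two K _ (Module.finrank_fin_fun K)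

theorem card_center_specialLinearGroup_two (K : Type*) [Field K] :
    Nat.card (Subgroup.center SL(2, K)) = 1 ∨ Nat.card (Subgroup.center SL(2, K)) = 2 := by
  let toRoots := Matrix.SpecialLinearGroup.center_equiv_rootsOfUnity' (R := K) (0 : Fin 2)
  rw [Nat.card_congr toRoots.toEquiv, Fintype.card_fin]
  have := card_rootsOfUnity K 2
  have := Nat.card_pos (α := rootsOfUnity 2 K)
  omega

end Card

section Counting

theorem sum_card_subtype_comm {ι κ : Type*} [Fintype ι] [Fintype κ] (R : ι → κ → Prop) :
    ∑ i, Nat.card {j // R i j} = ∑ j, Nat.card {i // R i j} := by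
  classical
  simp_rw [Nat.card_eq_fintype_card, Fintype.card_subtype]
  exact Finset.sum_card_bipartiteAbove_eq_sum_card_bipartiteBelow R

theorem sum_card_fixedBy_map_eq {G H X : Type*} [Group G] [Group H] [MulAction H X] [Finite X]
    {f : G →* H} (hf : Function.Injective f) (M : Subgroup G) [Fintype M] :
    ∑ g : M, Nat.card (fixedBy X (f g)) =
      Nat.card (orbitRel.Quotient (M.map f) X) * Nat.card M := by
  classical
  have := Fintype.ofFinite X
  let toMap := M.equivMapOfInjective f hf
  have : Fintype (M.map f) := Fintype.ofEquiv M toMap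
  rw [Nat.card_congr toMap.toEquiv, Nat.card_eq_fintype_card, Nat.card_eq_fintype_card,
    ← sum_card_fixedBy_eq_card_orbits_mul_card_group]
  refine Fintype.sum_equiv toMap.toEquiv _ _ fun g => ?_
  rw [← Nat.card_eq_fintype_card]
  rfl

end Counting

section TraceSq

variable {K : Type*} [Field K]

theorem smul_eq_self_of_mem_center {z : SL(2, K)} (hz : z ∈ Subgroup.center SL(2, K))
    (x : ℙ K (Fin 2 → K)) : z • x = x := by
  rw [← Projectivization.SL_mulAction_ker] at hz
  exact DFunLike.congr_fun (MonoidHom.mem_ker.1 hz) x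

theorem trace_sq_eq_four_of_mem_center {z : SL(2, K)} (hz : z ∈ Subgroup.center SL(2, K)) :
    z.1.trace ^ 2 = 4 := by
  obtain ⟨h01, -, h00⟩ := mem_center_iff_apply.1 hz
  have det_eq := z.det_coe
  rw [Matrix.det_fin_two, h01, h00] at det_eq
  rw [Matrix.trace_fin_two, h00]
  linear_combination 4 * det_eq

theorem neg_one_mem_center : (-1 : SL(2, K)) ∈ Subgroup.center SL(2, K) :=
  Subgroup.mem_center_iff.2 fun g => by rw [mul_neg_one, neg_one_mul]

theorem smul_eq_self_and_trace_sq_eq_four_iff {x : ℙ K (Fin 2 → K)} {g : SL(2, K)} :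
    g • x = x ∧ g.1.trace ^ 2 = 4 ↔
      ∃ z ∈ Subgroup.center SL(2, K), ∃ h ∈ lineStab x.submodule, z * h = g := by
  constructor
  · rintro ⟨hgx, htr⟩
    rcases (trace_sq_eq_four_iff ⟨g, hgx⟩).1 htr with h | h
    · exact ⟨1, one_mem _, g, mem_lineStab_iff_lineCharacter_eq_one.2 (Units.val_eq_one.1 h),
        one_mul g⟩
    · refine ⟨-1, neg_one_mem_center, -g, ?_, by rw [neg_one_mul, neg_neg]⟩
      have hneg : -g • x.rep = -(g • x.rep) := Matrix.neg_mulVec x.rep g.1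
      rw [mem_lineStab_submodule_iff, hneg, lineCharacter_eq_iff.1 h, neg_one_smul, neg_neg]
  · rintro ⟨z, hz, h, hh, rfl⟩
    have hzx := smul_eq_self_of_mem_center hz x
    have hhx := lineStab_le_stabilizer x hh
    have hzhx : z * h ∈ stabilizer SL(2, K) x := mul_mem hzx hhx
    have character_eq : lineCharacter x ⟨z * h, hzhx⟩ = lineCharacter x ⟨z, hzx⟩ := by
      refine Units.ext (lineCharacter_eq_iff.2 ?_)
      rw [lineCharacter_smul_rep, mul_smul, mem_lineStab_submodule_iff.1 hh]
    refine ⟨hzhx, (trace_sq_eq_four_iff ⟨z * h, hzhx⟩).2 ?_⟩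
    rw [character_eq, ← trace_sq_eq_four_iff]
    exact trace_sq_eq_four_of_mem_center hz

/-- The elements of `M` that fix the line `x` pointwise. -/
abbrev lineStabIn (M : Subgroup SL(2, K)) (x : ℙ K (Fin 2 → K)) : Subgroup M :=
  (lineStab x.submodule).subgroupOf M

theorem card_smul_eq_self_and_trace_sq_eq_four {M : Subgroup SL(2, K)}
    (hM : Subgroup.center SL(2, K) ≤ M) (x : ℙ K (Fin 2 → K)) :
    Nat.card {g : M // (g : SL(2, K)) • x = x ∧ (g : SL(2, K)).1.trace ^ 2 = 4} =
      Nat.card (Subgroup.center SL(2, K)) * Nat.card (lineStabIn M x) := by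
  rw [← Nat.card_prod]
  refine (Nat.card_eq_of_bijective (fun zh => ⟨⟨zh.1, hM zh.1.2⟩ * zh.2.1,
    smul_eq_self_and_trace_sq_eq_four_iff.2 ⟨_, zh.1.2, _, zh.2.2, rfl⟩⟩)
    ⟨fun a b hab => ?_, fun g => ?_⟩).symm
  · have hab : (a.1 * a.2.1 : SL(2, K)) = b.1 * b.2.1 :=
      congrArg (fun g => ((g : M) : SL(2, K))) (congrArg Subtype.val hab)
    have hinj := Subgroup.mul_injective_of_disjoint (disjoint_center_lineStab x)
      (a₁ := (a.1, ⟨a.2.1, a.2.2⟩)) (a₂ := (b.1, ⟨b.2.1, b.2.2⟩)) hab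
    obtain ⟨hz, hh⟩ := Prod.mk.inj hinj
    exact Prod.ext hz (Subtype.ext (Subtype.ext (Subtype.mk.inj hh)))
  · obtain ⟨z, hz, h, hh, hg⟩ := smul_eq_self_and_trace_sq_eq_four_iff.1 g.2
    have hhM : h ∈ M := (mul_mem_cancel_left (hM hz)).1 (hg ▸ g.1.2)
    exact ⟨(⟨z, hz⟩, ⟨⟨h, hhM⟩, hh⟩), Subtype.ext (Subtype.ext hg)⟩

end TraceSq

section ScalarExtension

/-- Extension of scalars from `F` to `E`. -/
abbrev extendScalars (F E : Type*) [Field F] [Field E] [Algebra F E] : SL(2, F) →* SL(2, E) :=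
  Matrix.SpecialLinearGroup.map (algebraMap F E)

variable {F E : Type*} [Field F] [Field E] [Algebra F E]

theorem extendScalars_injective : Function.Injective (extendScalars F E) := fun _ _ hgh =>
  Subtype.ext (Matrix.map_injective (algebraMap F E).injective (congrArg Subtype.val hgh))

theorem extendScalars_mem_center_iff {g : SL(2, F)} :
    extendScalars F E g ∈ Subgroup.center SL(2, E) ↔ g ∈ Subgroup.center SL(2, F) := by
  simp [mem_center_iff_apply]

theorem trace_extendScalars (g : SL(2, F)) :
    (extendScalars F E g).1.trace = algebraMap F E g.1.trace := by
  simp [Matrix.trace_fin_two]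

theorem card_fixedBy_extendScalars_add_card {g : SL(2, F)}
    (hg : g ∉ Subgroup.center SL(2, F)) {r : E}
    (hr : r ^ 2 - algebraMap F E g.1.trace * r + 1 = 0) :
    Nat.card (fixedBy (ℙ E (Fin 2 → E)) (extendScalars F E g)) +
      Nat.card {x : ℙ F (Fin 2 → F) // g • x = x ∧ g.1.trace ^ 2 = 4} = 2 := by
  have hgE := extendScalars_mem_center_iff (E := E).not.2 hg
  by_cases htr : g.1.trace ^ 2 = 4
  · rw [card_fixedBy_eq_one hgE (by rw [trace_extendScalars, ← map_pow, htr, map_ofNat])]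
    simp only [htr, and_true]
    exact congrArg (1 + ·) (card_fixedBy_eq_one hg htr)
  · rw [card_fixedBy_eq_two hgE ?_ (r := r) (by rwa [trace_extendScalars])]
    · simp [htr]
    · rwa [trace_extendScalars, ← map_pow, ← map_ofNat (algebraMap F E),
        (algebraMap F E).injective.ne_iff]

variable [Finite F] [Finite E]

theorem card_fixedBy_extendScalars_add_card_of_mem_center {g : SL(2, F)}
    (hg : g ∈ Subgroup.center SL(2, F)) :
    Nat.card (fixedBy (ℙ E (Fin 2 → E)) (extendScalars F E g)) +
      Nat.card {x : ℙ F (Fin 2 → F) // g • x = x ∧ g.1.trace ^ 2 = 4} =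
        Nat.card E + Nat.card F + 2 := by
  have hfixed : fixedBy (ℙ E (Fin 2 → E)) (extendScalars F E g) = Set.univ :=
    Set.eq_univ_of_forall (smul_eq_self_of_mem_center (extendScalars_mem_center_iff.2 hg))
  simp only [hfixed, smul_eq_self_of_mem_center hg, trace_sq_eq_four_of_mem_center hg, and_self,
    Nat.card_univ, Nat.card_congr (Equiv.subtypeUnivEquiv fun _ => trivial),
    card_projectivization_fin_two]
  ring

theorem card_orbits_mul_card_add [Fintype (ℙ F (Fin 2 → F))]
    (hE : ∀ a : F, ∃ r : E, r ^ 2 - algebraMap F E a * r + 1 = 0)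
    {M : Subgroup SL(2, F)} (hM : Subgroup.center SL(2, F) ≤ M) :
    Nat.card (orbitRel.Quotient (M.map (extendScalars F E)) (ℙ E (Fin 2 → E))) * Nat.card M +
        Nat.card (Subgroup.center SL(2, F)) *
          ∑ x : ℙ F (Fin 2 → F), Nat.card (lineStabIn M x) =
      Nat.card (Subgroup.center SL(2, F)) * (Nat.card E + Nat.card F) + 2 * Nat.card M := by
  classical
  have : Fintype M := Fintype.ofFinite M
  rw [← sum_card_fixedBy_map_eq extendScalars_injective, Finset.mul_sum]
  simp_rw [← card_smul_eq_self_and_trace_sq_eq_four hM]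
  rw [← sum_card_subtype_comm fun (g : M) (x : ℙ F (Fin 2 → F)) =>
    (g : SL(2, F)) • x = x ∧ g.1.1.trace ^ 2 = 4, ← Finset.sum_add_distrib]
  have hterm (g : M) : Nat.card (fixedBy (ℙ E (Fin 2 → E)) (extendScalars F E g)) +
      Nat.card {x : ℙ F (Fin 2 → F) // (g : SL(2, F)) • x = x ∧ g.1.1.trace ^ 2 = 4} =
      (if g ∈ (Subgroup.center SL(2, F)).subgroupOf M then Nat.card E + Nat.card F else 0) + 2 := by
    split_ifs with hg
    · exact card_fixedBy_extendScalars_add_card_of_mem_center hg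
    · exact card_fixedBy_extendScalars_add_card hg (hE _).choose_spec
  rw [Finset.sum_congr rfl fun g _ => hterm g, Finset.sum_add_distrib, ← Finset.sum_filter,
    Finset.sum_const, Finset.sum_const, ← Fintype.card_subtype, Finset.card_univ, smul_eq_mul,
    smul_eq_mul, mul_comm 2, ← Nat.card_eq_fintype_card, ← Nat.card_eq_fintype_card,
    ← Nat.card_congr (Subgroup.subgroupOfEquivOfLe hM).toEquiv]

end ScalarExtension

section QuadraticExtension
open Polynomial

variable {F E : Type*} [Field F] [Field E] [Algebra F E]

theorem exists_aeval_eq_zero_of_irreducible [Finite F] [Finite E] {P : F[X]} (hP : Irreducible P)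
    (hdvd : P.natDegree ∣ Module.finrank F E) : ∃ z : E, aeval z P = 0 := by
  have := Fact.mk hP
  let root := AdjoinRoot.powerBasis hP.ne_zero
  have := root.finite
  have hfinrank : Module.finrank F (AdjoinRoot P) = P.natDegree := root.finrank
  obtain ⟨embedding⟩ := FiniteField.nonempty_algHom_of_finrank_dvd (hfinrank ▸ hdvd)
  refine ⟨embedding (AdjoinRoot.root P), ?_⟩
  rw [aeval_algHom_apply, AdjoinRoot.aeval_eq, AdjoinRoot.mk_self, map_zero]

theorem exists_sq_sub_mul_add_one_eq_zero [Finite F] (hE : Module.finrank F E = 2) (a : F) :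
    ∃ r : E, r ^ 2 - algebraMap F E a * r + 1 = 0 := by
  have : Module.Finite F E := Module.finite_of_finrank_eq_succ hE
  have : Finite E := Module.finite_of_finite F
  let P : F[X] := C 1 * X ^ 2 + C (-a) * X + C 1
  have hdeg : P.natDegree = 2 := natDegree_quadratic one_ne_zero
  suffices ∃ r : E, aeval r P = 0 by simpa [P, ← sub_eq_add_neg] using this
  by_cases hP : Irreducible P
  · exact exists_aeval_eq_zero_of_irreducible hP (hdeg.trans hE.symm).dvd
  · rw [irreducible_iff_roots_eq_zero_of_degree_le_three hdeg.ge (by omega)] at hP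
    obtain ⟨r, hr⟩ := Multiset.exists_mem_of_ne_zero hP
    exact ⟨algebraMap F E r, by
      rw [aeval_algebraMap_apply, coe_aeval_eq_eval, (mem_roots'.1 hr).2, map_zero]⟩

theorem exists_finrank_eq_two (F : Type*) [Field F] [Finite F] :
    ∃ (E : Type) (_ : Field E) (_ : Algebra F E), Module.finrank F E = 2 := by
  obtain ⟨p, _⟩ := CharP.exists F
  have := Fact.mk (CharP.char_is_prime F p)
  exact ⟨FiniteField.Extension F p 2, inferInstance, inferInstance,
    FiniteField.finrank_extension F p 2⟩

end QuadraticExtension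

section RationalPoints

variable {F E : Type*} [Field F] [Field E] [Algebra F E]

/-- The inclusion of the projective line over `F` into the one over `E`. -/
def rationalPoint (F E : Type*) [Field F] [Field E] [Algebra F E] :
    ℙ F (Fin 2 → F) → ℙ E (Fin 2 → E) :=
  Projectivization.map (σ := algebraMap F E)
    { toFun := (algebraMap F E ∘ ·)
      map_add' := fun _ _ => funext fun _ => map_add _ _ _
      map_smul' := fun _ _ => funext fun _ => map_mul _ _ _ }
    (algebraMap F E).injective.comp_left

theorem rationalPoint_injective : Function.Injective (rationalPoint F E) := by
  intro x y hxy
  rw [← x.mk_rep, ← y.mk_rep, rationalPoint, Projectivization.map_mk, Projectivization.map_mk,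
    mk_eq_mk_iff_mul_eq_mul] at hxy
  rw [← x.mk_rep, ← y.mk_rep, mk_eq_mk_iff_mul_eq_mul]
  apply (algebraMap F E).injective
  simpa using hxy

theorem extendScalars_smul_rationalPoint (g : SL(2, F)) (x : ℙ F (Fin 2 → F)) :
    extendScalars F E g • rationalPoint F E x = rationalPoint F E (g • x) := by
  rw [← x.mk_rep, Projectivization.smul_mk]
  simp only [rationalPoint, Projectivization.map_mk, Projectivization.smul_mk]
  congr 1
  refine funext <| Fin.forall_fin_two.2 ⟨?_, ?_⟩
  · simp [smul_apply_zero]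
  · simp [smul_apply_one]

end RationalPoints

section Orbits

variable {G X : Type*} [Group G] [MulAction G X]

theorem isPretransitive_or_exists_forall_smul_eq [Finite X] {y : X}
    (hy : Nat.card X ≤ Nat.card (orbit G y) + 1) :
    IsPretransitive G X ∨ ∃ x : X, ∀ g : G, g • x = x := by
  rw [isPretransitive_iff_orbit_eq_univ y, or_iff_not_imp_left]
  intro hne
  obtain ⟨x, hx⟩ := (Set.ne_univ_iff_exists_notMem _).1 hne
  have hcompl : (orbit G y)ᶜ.ncard ≤ 1 := by
    have := Set.ncard_add_ncard_compl (orbit G y)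
    rw [Nat.card_coe_set_eq] at hy
    omega
  refine ⟨x, fun g => (Set.ncard_le_one (Set.toFinite _)).1 hcompl _ ?_ x hx⟩
  rwa [Set.mem_compl_iff, ← orbit_eq_iff, orbit_smul, orbit_eq_iff]

theorem card_orbit_dvd_index {N : Subgroup G} {x : X} (hN : N ≤ stabilizer G x) :
    Nat.card (orbit G x) ∣ N.index := by
  rw [Nat.card_coe_set_eq, ← index_stabilizer]
  exact Subgroup.index_dvd_of_le hN

theorem sum_card_orbit_ne_add_card_orbit [Finite X] [Fintype (orbitRel.Quotient G X)]
    [DecidableEq (orbitRel.Quotient G X)] (ω₀ : orbitRel.Quotient G X) :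
    ∑ ω : {ω // ω ≠ ω₀}, Nat.card ω.1.orbit + Nat.card ω₀.orbit = Nat.card X := by
  rw [Nat.card_congr (selfEquivSigmaOrbits' G X), Nat.card_sigma,
    Fintype.sum_eq_add_sum_subtype_ne _ ω₀, add_comm]

end Orbits

section Subgroups

variable {F : Type*} [Field F] (M : Subgroup SL(2, F))

theorem mem_lineStabIn_iff {x : ℙ F (Fin 2 → F)} {g : M} :
    g ∈ lineStabIn M x ↔ g • x.rep = x.rep :=
  mem_lineStab_submodule_iff

theorem lineStabIn_le_stabilizer (x : ℙ F (Fin 2 → F)) : lineStabIn M x ≤ stabilizer M x :=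
  fun _ hg => lineStab_le_stabilizer x hg

theorem exists_card_stabilizer_eq (x : ℙ F (Fin 2 → F)) :
    ∃ t, t ∣ Nat.card F - 1 ∧ Nat.card (stabilizer M x) = Nat.card (lineStabIn M x) * t := by
  let χ : stabilizer M x →* Fˣ := lineCharacter x
  have hker : χ.ker = (lineStabIn M x).subgroupOf (stabilizer M x) := by
    ext g
    have hone := lineCharacter_eq_iff (g := g) (r := 1)
    rw [one_smul] at hone
    rw [MonoidHom.mem_ker, ← Units.val_inj, Subgroup.mem_subgroupOf, mem_lineStabIn_iff]
    exact hone
  refine ⟨Nat.card χ.range, ?_, ?_⟩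
  · rw [← Nat.card_units]
    exact χ.range.card_subgroup_dvd_card
  · rw [← χ.ker.card_mul_index, Subgroup.index_ker, hker,
      Nat.card_congr (Subgroup.subgroupOfEquivOfLe (lineStabIn_le_stabilizer M x)).toEquiv]

theorem card_lineStabIn_smul (x : ℙ F (Fin 2 → F)) (g : M) :
    Nat.card (lineStabIn M (g • x)) = Nat.card (lineStabIn M x) := by
  have hconj : lineStabIn M (g • x) = (lineStabIn M x).map (MulAut.conj g).toMonoidHom := by
    ext h
    have hsmul : (g • x).submodule = (g : SL(2, F)) • x.submodule := PSL.smul_submodule _ x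
    rw [Subgroup.mem_subgroupOf, hsmul, Matrix.SpecialLinearGroup.lineStab_smul,
      Subgroup.mem_pointwise_smul_iff_inv_smul_mem, Subgroup.mem_map_equiv]
    rfl
  rw [hconj]
  exact (Nat.card_congr ((lineStabIn M x).equivMapOfInjective _
    (MulAut.conj g).injective).toEquiv).symm

theorem card_lineStabIn_dvd (x : ℙ F (Fin 2 → F)) :
    Nat.card (lineStabIn M x) ∣ Nat.card F := by
  rw [← card_lineStab x]
  exact Subgroup.card_comap_dvd_of_injective _ _ M.subtype_injective

theorem eq_top_of_forall_card_lineStabIn_eq [Finite F]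
    (hM : ∀ x, Nat.card (lineStabIn M x) = Nat.card F) : M = ⊤ := by
  rw [← top_le_iff, ← PSL.iSup_lineStab_eq_top, iSup_le_iff]
  intro x
  have hcard : Nat.card (lineStab x.submodule) ≤ Nat.card ↥(M ⊓ lineStab x.submodule) := by
    rw [card_lineStab, ← hM x, lineStabIn, ← Subgroup.inf_subgroupOf_left]
    exact (Nat.card_congr (Subgroup.subgroupOfEquivOfLe inf_le_left).toEquiv).le
  exact (Subgroup.eq_of_le_of_card_ge inf_le_right hcard).ge.trans inf_le_left

theorem eq_of_mem_fixedPoints_lineStabIn {x y : ℙ F (Fin 2 → F)} (hM : lineStabIn M x ≠ ⊥)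
    (hy : ∀ g ∈ lineStabIn M x, g • y = y) : y = x := by
  obtain ⟨⟨g, hg⟩, hg1⟩ := Subgroup.ne_bot_iff_exists_ne_one.1 hM
  exact eq_of_mem_lineStab_of_smul_eq hg (by simpa using hg1) (hy g hg)

theorem isPGroup_lineStabIn [Finite F] {p : ℕ} [Fact p.Prime] [CharP F p]
    (x : ℙ F (Fin 2 → F)) : IsPGroup p (lineStabIn M x) := by
  have := Fintype.ofFinite F
  obtain ⟨n, hp, hF⟩ := FiniteField.card F p
  rw [← Nat.card_eq_fintype_card] at hF
  obtain ⟨k, -, hk⟩ := (Nat.dvd_prime_pow hp).1 (hF ▸ card_lineStabIn_dvd M x)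
  exact IsPGroup.of_card hk

-- A point is the only fixed point of its own unipotent group, so the length of an orbit is
-- `1` modulo `p` if counted by a point inside it and `0` if counted by a point outside it.
theorem isPretransitive_of_forall_lineStabIn_ne_bot [Finite F]
    (hM : ∀ x, lineStabIn M x ≠ ⊥) : IsPretransitive M (ℙ F (Fin 2 → F)) := by
  obtain ⟨p, hF⟩ := CharP.exists F
  have := Fact.mk (CharP.char_is_prime F p)
  have hfixed (x y : ℙ F (Fin 2 → F)) (z : orbit M y)
      (hz : z ∈ fixedPoints (lineStabIn M x) (orbit M y)) : (z : ℙ F (Fin 2 → F)) = x :=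
    eq_of_mem_fixedPoints_lineStabIn M (hM x) fun g hg => congrArg Subtype.val (hz ⟨g, hg⟩)
  have hcount (x y : ℙ F (Fin 2 → F)) :=
    (isPGroup_lineStabIn M (p := p) x).card_modEq_card_fixedPoints (orbit M y)
  by_contra hnot
  obtain ⟨y, x, hx⟩ : ∃ y x : ℙ F (Fin 2 → F), x ∉ orbit M y := by
    by_contra! h
    exact hnot ⟨h⟩
  have hzero : Nat.card (fixedPoints (lineStabIn M x) (orbit M y)) = 0 := by
    have : IsEmpty (fixedPoints (lineStabIn M x) (orbit M y)) :=
      ⟨fun z => hx (hfixed x y z z.2 ▸ z.1.2)⟩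
    exact Nat.card_of_isEmpty
  have hone : Nat.card (fixedPoints (lineStabIn M y) (orbit M y)) = 1 := by
    rw [Nat.card_eq_one_iff_exists]
    exact ⟨⟨⟨y, mem_orbit_self y⟩, fun g => Subtype.ext (lineStabIn_le_stabilizer M y g.2)⟩,
      fun z => Subtype.ext (Subtype.ext (hfixed y y z z.2))⟩
  have hmod := (hcount x y).symm.trans (hcount y y)
  rw [hzero, hone] at hmod
  exact zero_ne_one (hmod.eq_of_lt_of_lt (Fact.out : p.Prime).pos (Fact.out : p.Prime).one_lt)

theorem card_le_card_orbit_of_lineStabIn_eq_bot [Finite F] (hindex : M.index ≤ Nat.card F + 1)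
    {y : ℙ F (Fin 2 → F)} (hy : lineStabIn M y = ⊥) : Nat.card F ≤ Nat.card (orbit M y) := by
  obtain ⟨t, ht, hcard⟩ := exists_card_stabilizer_eq M y
  rw [hy, Subgroup.card_bot, one_mul] at hcard
  have hF : 0 < Nat.card F - 1 := Nat.sub_pos_of_lt Finite.one_lt_card
  have hle : t ≤ Nat.card F - 1 := Nat.le_of_dvd hF ht
  have horbit : Nat.card M = Nat.card (orbit M y) * t := by
    rw [← hcard, ← Nat.card_prod, Nat.card_congr (orbitProdStabilizerEquivGroup M y)]
  refine Nat.le_of_mul_le_mul_right (Nat.le_of_mul_le_mul_right ?_ (Nat.card F).succ_pos) hF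
  calc Nat.card F * (Nat.card F - 1) * (Nat.card F + 1)
  _ = Nat.card M * M.index := by rw [M.card_mul_index, card_specialLinearGroup_two, mul_comm]
  _ ≤ Nat.card (orbit M y) * (Nat.card F - 1) * (Nat.card F + 1) := by
    rw [horbit]
    gcongr

theorem isPretransitive_or_exists_forall_smul_eq_of_index_le [Finite F]
    (hindex : M.index ≤ Nat.card F + 1) :
    IsPretransitive M (ℙ F (Fin 2 → F)) ∨ ∃ x : ℙ F (Fin 2 → F), ∀ g : M, g • x = x := by
  by_cases hM : ∀ x, lineStabIn M x ≠ ⊥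
  · exact Or.inl (isPretransitive_of_forall_lineStabIn_ne_bot M hM)
  · push Not at hM
    obtain ⟨y, hy⟩ := hM
    apply isPretransitive_or_exists_forall_smul_eq (y := y)
    rw [card_projectivization_fin_two]
    exact Nat.succ_le_succ (card_le_card_orbit_of_lineStabIn_eq_bot M hindex hy)

theorem eq_stabilizer_of_forall_smul_eq [Finite F] (hindex : M.index ≤ Nat.card F + 1)
    {x : ℙ F (Fin 2 → F)} (hx : ∀ g : M, g • x = x) : M = stabilizer SL(2, F) x := by
  refine Subgroup.eq_of_le_of_card_ge (fun g hg => hx ⟨g, hg⟩) ?_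
  refine Nat.le_of_mul_le_mul_right ?_ (Nat.card F).succ_pos
  calc Nat.card (stabilizer SL(2, F) x) * (Nat.card F + 1)
  _ = Nat.card M * M.index := by
    rw [← card_projectivization_fin_two, ← index_stabilizer_of_transitive SL(2, F) x,
      Subgroup.card_mul_index, Subgroup.card_mul_index]
  _ ≤ Nat.card M * (Nat.card F + 1) := by gcongr

end Subgroups

section Transitive

variable {F E : Type*} [Field F] [Field E] [Algebra F E] {M : Subgroup SL(2, F)}

theorem orbit_rationalPoint [IsPretransitive M (ℙ F (Fin 2 → F))] (x : ℙ F (Fin 2 → F)) :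
    orbit (M.map (extendScalars F E)) (rationalPoint F E x) = Set.range (rationalPoint F E) := by
  ext z
  constructor
  · rintro ⟨⟨-, g, -, rfl⟩, rfl⟩
    exact ⟨g • x, (extendScalars_smul_rationalPoint g x).symm⟩
  · rintro ⟨y, rfl⟩
    obtain ⟨g, rfl⟩ := exists_smul_eq M x y
    exact ⟨⟨_, Subgroup.mem_map_of_mem _ g.2⟩, extendScalars_smul_rationalPoint (g : SL(2, F)) x⟩

theorem card_orbit_map_extendScalars_dvd (z : ℙ E (Fin 2 → E)) :
    Nat.card (orbit (M.map (extendScalars F E)) z) ∣ (Subgroup.center SL(2, F)).relIndex M := by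
  rw [← Subgroup.relIndex_map_map_of_injective _ _ (extendScalars_injective (E := E))]
  apply card_orbit_dvd_index
  rintro ⟨-, -⟩ ⟨g, hg, rfl⟩
  exact smul_eq_self_of_mem_center (extendScalars_mem_center_iff.2 hg) z

theorem exists_card_eq_of_isPretransitive [Finite F] [IsPretransitive M (ℙ F (Fin 2 → F))]
    (x : ℙ F (Fin 2 → F)) : ∃ t, t ∣ Nat.card F - 1 ∧
      Nat.card M = (Nat.card F + 1) * (Nat.card (lineStabIn M x) * t) := by
  obtain ⟨t, ht, hcard⟩ := exists_card_stabilizer_eq M x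
  refine ⟨t, ht, ?_⟩
  rw [← hcard, ← card_projectivization_fin_two, ← index_stabilizer_of_transitive M x, mul_comm,
    Subgroup.card_mul_index]

theorem sum_card_orbit_add_card_eq_sq [Finite F] (hE : Module.finrank F E = 2)
    [IsPretransitive M (ℙ F (Fin 2 → F))] (x : ℙ F (Fin 2 → F))
    [Fintype (orbitRel.Quotient (M.map (extendScalars F E)) (ℙ E (Fin 2 → E)))]
    [DecidableEq (orbitRel.Quotient (M.map (extendScalars F E)) (ℙ E (Fin 2 → E)))] :
    ∑ ω : {ω : orbitRel.Quotient (M.map (extendScalars F E)) (ℙ E (Fin 2 → E)) //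
      ω ≠ Quotient.mk'' (rationalPoint F E x)}, Nat.card ω.1.orbit + Nat.card F =
      Nat.card F ^ 2 := by
  have : Module.Finite F E := Module.finite_of_finrank_eq_succ hE
  have : Finite E := Module.finite_of_finite F
  have hsum := sum_card_orbit_ne_add_card_orbit (G := M.map (extendScalars F E))
    (Quotient.mk'' (rationalPoint F E x))
  rw [orbitRel.Quotient.orbit_mk, orbit_rationalPoint,
    Nat.card_range_of_injective rationalPoint_injective, card_projectivization_fin_two,
    card_projectivization_fin_two, Module.natCard_eq_pow_finrank (K := F) (V := E), hE] at hsum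
  omega

theorem card_orbits_mul_eq [Finite F] (hE : Module.finrank F E = 2)
    (hM : Subgroup.center SL(2, F) ≤ M) {u e t : ℕ}
    (hu : ∀ x, Nat.card (lineStabIn M x) = u) (hq : Nat.card F = u * (e + 1))
    (hcard : Nat.card M = (Nat.card F + 1) * (u * t)) :
    Nat.card (orbitRel.Quotient (M.map (extendScalars F E)) (ℙ E (Fin 2 → E))) * t =
      Nat.card (Subgroup.center SL(2, F)) * e + 2 * t := by
  have : Module.Finite F E := Module.finite_of_finrank_eq_succ hE
  have : Finite E := Module.finite_of_finite F
  have : Fintype (ℙ F (Fin 2 → F)) := Fintype.ofFinite _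
  have hcount := card_orbits_mul_card_add (exists_sq_sub_mul_add_one_eq_zero hE) hM
  simp only [hu, Finset.sum_const, Finset.card_univ, ← Nat.card_eq_fintype_card, smul_eq_mul,
    card_projectivization_fin_two, Module.natCard_eq_pow_finrank (K := F) (V := E), hE,
    hcard] at hcount
  have hsq : Nat.card F ^ 2 + Nat.card F = (Nat.card F + 1) * u * (e + 1) := by
    rw [mul_assoc, ← hq]
    ring
  have hu0 : 0 < u := Nat.pos_of_mul_pos_right (hq ▸ Nat.card_pos)
  refine Nat.eq_of_mul_eq_mul_left (Nat.mul_pos (Nat.card F).succ_pos hu0) ?_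
  rw [hsq] at hcount
  linarith

theorem index_mul_eq_of_card_eq [Finite F] {u e t : ℕ} (hq : Nat.card F = u * (e + 1))
    (hcard : Nat.card M = (Nat.card F + 1) * (u * t)) :
    M.index * t = (e + 1) * (Nat.card F - 1) := by
  have hu : 0 < u := Nat.pos_of_mul_pos_right (hq ▸ Nat.card_pos)
  refine Nat.eq_of_mul_eq_mul_left (Nat.mul_pos (Nat.card F).succ_pos hu) ?_
  calc (Nat.card F + 1) * u * (M.index * t)
  _ = Nat.card M * M.index := by
    rw [hcard]
    ring
  _ = (Nat.card F + 1) * (u * (e + 1) * (Nat.card F - 1)) := by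
    rw [M.card_mul_index, card_specialLinearGroup_two, ← hq]
  _ = (Nat.card F + 1) * u * ((e + 1) * (Nat.card F - 1)) := by ring

theorem card_lineStabIn_eq_of_isPretransitive [IsPretransitive M (ℙ F (Fin 2 → F))]
    (x y : ℙ F (Fin 2 → F)) : Nat.card (lineStabIn M x) = Nat.card (lineStabIn M y) := by
  obtain ⟨g, rfl⟩ := exists_smul_eq M y x
  exact card_lineStabIn_smul M y g

theorem card_lineStabIn_eq_card_of_isPretransitive [Finite F]
    (hF : 13 ≤ Nat.card F ∨ Nat.card F = 8) [IsPretransitive M (ℙ F (Fin 2 → F))]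
    (hM : Subgroup.center SL(2, F) ≤ M) (hindex : M.index ≤ Nat.card F + 1)
    (x : ℙ F (Fin 2 → F)) : Nat.card (lineStabIn M x) = Nat.card F := by
  classical
  obtain ⟨E, _, _, hE⟩ := exists_finrank_eq_two F
  have : Module.Finite F E := Module.finite_of_finrank_eq_succ hE
  have : Finite E := Module.finite_of_finite F
  let Ω := orbitRel.Quotient (M.map (extendScalars F E)) (ℙ E (Fin 2 → E))
  have : Fintype Ω := Fintype.ofFinite Ω
  let d := Nat.card (Subgroup.center SL(2, F))
  let g := (Subgroup.center SL(2, F)).relIndex M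
  have hd : 0 < d := Nat.card_pos
  obtain ⟨f, hq⟩ := card_lineStabIn_dvd M x
  obtain ⟨e, rfl⟩ : ∃ e, f = e + 1 := Nat.exists_eq_succ_of_ne_zero (by rintro rfl; omega)
  rcases e.eq_zero_or_pos with rfl | he
  · rw [hq, zero_add, mul_one]
  obtain ⟨t, ht, hcard⟩ := exists_card_eq_of_isPretransitive (M := M) x
  have hg : d * g = Nat.card M := by
    simpa [Subgroup.relIndex_bot_left] using Subgroup.relIndex_mul_relIndex ⊥ _ M bot_le hM
  have hA : (Nat.card Ω - 2) * t = d * e := by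
    rw [Nat.sub_mul, card_orbits_mul_eq hE hM
      (card_lineStabIn_eq_of_isPretransitive · x) hq hcard, Nat.add_sub_cancel]
  have hAg : (Nat.card Ω - 2) * g =
      (Nat.card F + 1) * (Nat.card (lineStabIn M x) * e) := by
    refine Nat.eq_of_mul_eq_mul_left hd ?_
    linear_combination (Nat.card Ω - 2) * (hg.trans hcard) +
      (Nat.card F + 1) * Nat.card (lineStabIn M x) * hA
  refine absurd (sum_card_orbit_add_card_eq_sq hE (M := M) x)
    (sum_add_ne_sq_of_forall_dvd hF hq he (card_center_specialLinearGroup_two F) ht hindex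
      (index_mul_eq_of_card_eq hq hcard) hA hAg ?_ fun ω => ?_)
  · have hA0 : 0 < Nat.card Ω - 2 := Nat.pos_of_mul_pos_right (hA ▸ Nat.mul_pos hd he)
    rw [Fintype.card_subtype_compl, Fintype.card_subtype_eq, ← Nat.card_eq_fintype_card]
    change Nat.card Ω - 1 = Nat.card Ω - 2 + 1
    omega
  · obtain ⟨z, hz⟩ := Quotient.exists_rep ω.1
    rw [← hz]
    exact card_orbit_map_extendScalars_dvd z

end Transitive

theorem isMultiplyPretransitive_two_projectiveSpecialLinearGroup (F : Type*) [Field F] :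
    IsMultiplyPretransitive (Matrix.ProjectiveSpecialLinearGroup (Fin 2) F)
      (ℙ F (Fin 2 → F)) 2 := by
  refine is_two_pretransitive_iff.2 fun hab hcd => ?_
  obtain ⟨g, hg⟩ := is_two_pretransitive_iff.1
    (inferInstance : IsMultiplyPretransitive SL(2, F) (ℙ F (Fin 2 → F)) 2) hab hcd
  exact ⟨QuotientGroup.mk g, hg⟩

section IndexLeCardAddOne

variable {F : Type*} [Field F] [Finite F]

theorem exists_eq_stabilizer_of_center_le (hF : 13 ≤ Nat.card F ∨ Nat.card F = 8)
    {M : Subgroup SL(2, F)} (hcenter : Subgroup.center SL(2, F) ≤ M) (hM : M ≠ ⊤)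
    (hindex : M.index ≤ Nat.card F + 1) :
    ∃ x : ℙ F (Fin 2 → F), M = stabilizer SL(2, F) x := by
  rcases isPretransitive_or_exists_forall_smul_eq_of_index_le M hindex with htrans | ⟨x, hx⟩
  · exact absurd (eq_top_of_forall_card_lineStabIn_eq M
      (card_lineStabIn_eq_card_of_isPretransitive hF hcenter hindex)) hM
  · exact ⟨x, eq_stabilizer_of_forall_smul_eq M hindex hx⟩

theorem exists_eq_stabilizer_of_index_le (hF : 13 ≤ Nat.card F ∨ Nat.card F = 8)
    {M : Subgroup (Matrix.ProjectiveSpecialLinearGroup (Fin 2) F)} (hM : M ≠ ⊤)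
    (hindex : M.index ≤ Nat.card F + 1) : ∃ x : ℙ F (Fin 2 → F),
      M = stabilizer (Matrix.ProjectiveSpecialLinearGroup (Fin 2) F) x := by
  let proj := QuotientGroup.mk' (Subgroup.center SL(2, F))
  have hproj : Function.Surjective proj := QuotientGroup.mk'_surjective _
  obtain ⟨x, hx⟩ := exists_eq_stabilizer_of_center_le hF (M := M.comap proj)
    (QuotientGroup.le_comap_mk' _ M)
    (fun h => hM (Subgroup.comap_injective hproj (h.trans (Subgroup.comap_top proj).symm)))
    (by rwa [M.index_comap_of_surjective hproj])
  exact ⟨x, Subgroup.comap_injective hproj hx⟩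

theorem statement9_general (hF : 13 ≤ Nat.card F ∨ Nat.card F = 8)
    {α : Type*} [Fintype α] [DecidableEq α] (hα : Nat.card α = Nat.card F + 1)
    {f : Matrix.ProjectiveSpecialLinearGroup (Fin 2) F →* alternatingGroup α} (hf : f ≠ 1) :
    IsLocalizationHom f := by
  have := isMultiplyPretransitive_two_projectiveSpecialLinearGroup F
  have hP := card_projectivization_fin_two F
  refine isLocalizationHom_of_ne_one (P := ℙ F (Fin 2 → F)) ?_ (hα.trans hP.symm)
    (fun M hM hindex => exists_eq_stabilizer_of_index_le hF hM (hindex.trans_eq hP)) hf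
  rw [← Nat.card_eq_fintype_card]
  omega

end IndexLeCardAddOne

/-- For a prime power `q = p ^ k` with `q ≥ 13` or `q = 8` (i.e. `q ≥ 4`
and `q ∉ {4, 5, 7, 9, 11}`), every injective group homomorphism from
`PSL(2, 𝔽_q)` into the alternating group `A_{q+1}` is a localization. -/
theorem statement9 (p k : ℕ) [Fact p.Prime] (hk : 1 ≤ k)
    (q : ℕ) (hq : q = p ^ k) (hq' : 13 ≤ q ∨ q = 8)
    (f : Matrix.ProjectiveSpecialLinearGroup (Fin 2) (GaloisField p k) →*
      alternatingGroup (Fin (q + 1)))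
    (hf : Function.Injective f) :
    IsLocalizationHom f := by
  have hcard : Nat.card (GaloisField p k) = q :=
    (GaloisField.card p k (Nat.one_le_iff_ne_zero.1 hk)).trans hq.symm
  have hf1 : f ≠ 1 := by
    rintro rfl
    exact Function.not_injective_const hf
  exact statement9_general (hcard.symm ▸ hq') (by simp [hcard]) hf1
end

section
/- Let p be a prime, k ≥ 1, and q = p^k with q ≥ 4. Then any two subgroups of index q + 1 in PSL(2, F_q) (the quotient of SL(2, F_q) by its center, where F_q is the field with q elements) are conjugate. -/
/-!
Subgroups of index `q + 1` are shown to be stabilizers of points of the projective line, which are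
conjugate because the action on the line is transitive. It is enough to argue in `SL(2, F)`.

Let `U` be the stabilizer of a nonzero vector, a `p`-group which fixes one point `x` and is
transitive on the others. As `p` does not divide `q + 1`, `U` fixes a coset of any given subgroup of
index `q + 1`, so some conjugate `K` of that subgroup contains `U`. If `K` moved `x`, it would be
transitive on the line, and `K ⊓ stabilizer x` would have index `(q + 1) ^ 2`. This is impossible,
because it contains `U`, whose index is at most the number `q ^ 2` of vectors. Hence `K` lies in the
stabilizer of `x`, which has the same index.
-/

open MulAction Matrix.SpecialLinearGroup
open scoped MatrixGroups LinearAlgebra.Projectivization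

section GroupAction

variable {G X : Type*} [Group G] [MulAction G X] {U K : Subgroup G} {x y : X}

lemma index_inf_stabilizer (K : Subgroup G) [IsPretransitive K X] (x : X) :
    (K ⊓ stabilizer G x).index = Nat.card X * K.index := by
  have stabilizer_eq : (stabilizer G x).subgroupOf K = stabilizer K x := rfl
  rw [← Subgroup.relIndex_mul_index inf_le_left, Subgroup.inf_relIndex_left, Subgroup.relIndex,
    stabilizer_eq, index_stabilizer_of_transitive]

lemma index_stabilizer_le_card [Finite X] (x : X) : (stabilizer G x).index ≤ Nat.card X := by
  rw [index_stabilizer]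
  exact Set.ncard_le_card _

lemma isPretransitive_of_not_le_stabilizer (hUK : U ≤ K) (hxy : {x}ᶜ ⊆ orbit U y)
    (hK : ¬ K ≤ stabilizer G x) : IsPretransitive K X := by
  have compl_subset : {x}ᶜ ⊆ orbit K y := fun z hz ↦ by
    obtain ⟨u, rfl⟩ := hxy hz
    exact ⟨⟨u, hUK u.2⟩, rfl⟩
  obtain ⟨k, hk, hkx⟩ := SetLike.not_le_iff_exists.1 hK
  have mem_orbit : x ∈ orbit K y :=
    orbit_eq_iff.2 (compl_subset hkx) ▸ mem_orbit_smul (⟨k, hk⟩ : K) x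
  refine (isPretransitive_iff_orbit_eq_univ y).2 (Set.eq_univ_of_forall fun z ↦ ?_)
  obtain rfl | hz := eq_or_ne z x
  · exact mem_orbit
  · exact compl_subset hz

lemma le_stabilizer_of_index_lt [U.FiniteIndex] (hUK : U ≤ K) (hUx : U ≤ stabilizer G x)
    (hxy : {x}ᶜ ⊆ orbit U y) (hlt : U.index < Nat.card X * K.index) : K ≤ stabilizer G x := by
  by_contra hK
  have := isPretransitive_of_not_le_stabilizer hUK hxy hK
  have index_le := Subgroup.index_antitone (le_inf hUK hUx)
  rw [index_inf_stabilizer] at index_le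
  exact hlt.not_ge index_le

lemma exists_le_map_conj_of_not_dvd_index {p : ℕ} [Fact p.Prime] (hU : IsPGroup p U)
    (hK : ¬ p ∣ K.index) : ∃ g : G, U ≤ K.map (MulAut.conj g).toMonoidHom := by
  obtain ⟨c, hc⟩ := hU.nonempty_fixed_point_of_prime_not_dvd_card (G ⧸ K) hK
  obtain ⟨g, rfl⟩ := exists_smul_eq G ((1 : G) : G ⧸ K) c
  refine ⟨g, ?_⟩
  calc U ≤ stabilizer G (g • ((1 : G) : G ⧸ K)) := fun u hu ↦ hc ⟨u, hu⟩
    _ = K.map (MulAut.conj g).toMonoidHom := by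
      rw [stabilizer_smul_eq_stabilizer_map_conj, stabilizer_quotient]

lemma eq_stabilizer_of_le_of_index_eq_card [IsPretransitive G X] [U.FiniteIndex] (hUK : U ≤ K)
    (hUx : U ≤ stabilizer G x) (hxy : {x}ᶜ ⊆ orbit U y) (hlt : U.index < Nat.card X ^ 2)
    (hK : K.index = Nat.card X) : K = stabilizer G x := by
  have K_le : K ≤ stabilizer G x :=
    le_stabilizer_of_index_lt hUK hUx hxy (by rwa [hK, ← sq])
  have : K.FiniteIndex := Subgroup.finiteIndex_of_le hUK
  refine K_le.eq_of_not_lt fun K_lt ↦ (Subgroup.index_strictAnti K_lt).ne ?_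
  rw [hK, index_stabilizer_of_transitive]

theorem exists_eq_stabilizer_of_index_eq_card [IsPretransitive G X] {p : ℕ} [Fact p.Prime]
    [U.FiniteIndex] (hU : IsPGroup p U) (hUx : U ≤ stabilizer G x) (hxy : {x}ᶜ ⊆ orbit U y)
    (hp : ¬ p ∣ Nat.card X) (hlt : U.index < Nat.card X ^ 2) (hK : K.index = Nat.card X) :
    ∃ z : X, K = stabilizer G z := by
  obtain ⟨g, hUK⟩ := exists_le_map_conj_of_not_dvd_index hU (hK ▸ hp)
  have map_eq : K.map (MulAut.conj g).toMonoidHom = stabilizer G x :=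
    eq_stabilizer_of_le_of_index_eq_card hUK hUx hxy hlt
      ((K.index_map_equiv (MulAut.conj g)).trans hK)
  have comp_eq_id : (MulAut.conj g⁻¹).toMonoidHom.comp (MulAut.conj g).toMonoidHom = .id G := by
    ext; simp [mul_assoc]
  refine ⟨g⁻¹ • x, ?_⟩
  rw [stabilizer_smul_eq_stabilizer_map_conj, ← map_eq, Subgroup.map_map, comp_eq_id,
    Subgroup.map_id]

lemma stabilizer_le_stabilizer_mk {D V : Type*} [DivisionRing D] [AddCommGroup V] [Module D V]
    [DistribMulAction G V] [SMulCommClass G D V] {v : V} (hv : v ≠ 0) :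
    stabilizer G v ≤ stabilizer G (Projectivization.mk D v hv) := fun g hg ↦ by
  rw [mem_stabilizer_iff] at hg ⊢
  simp only [Projectivization.smul_mk, hg]

end GroupAction

section Transvection

variable {ι R : Type*} [DecidableEq ι] [Fintype ι] [CommRing R]

lemma transvection_pow {i j : ι} (hij : i ≠ j) (b : R) (n : ℕ) :
    transvection hij b ^ n = transvection hij (n • b) := by
  induction n with
  | zero => simp
  | succ n ih => rw [pow_succ, ih, succ_nsmul, transvection_add]

lemma exists_eq_transvection_of_smul_single_eq {g : SL(2, R)}
    (hg : g • (Pi.single 0 1 : Fin 2 → R) = Pi.single 0 1) :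
    ∃ b : R, g = transvection (zero_ne_one' (Fin 2)) b := by
  have col (i : Fin 2) : g i 0 = (Pi.single 0 1 : Fin 2 → R) i := by
    rw [← hg, Matrix.SpecialLinearGroup.smul_def, Matrix.smul_eq_mulVec,
      Matrix.mulVec_single_one, Matrix.col_apply]
  have h00 : g 0 0 = 1 := by simpa using col 0
  have h10 : g 1 0 = 0 := by simpa using col 1
  have h11 : g 1 1 = 1 := by
    have det_eq := g.det_coe
    rwa [Matrix.det_fin_two, h00, h10, one_mul, mul_zero, sub_zero] at det_eq
  refine ⟨g 0 1, ?_⟩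
  ext i j
  fin_cases i <;> fin_cases j <;> simp [transvection_coe, h00, h10, h11]

lemma isPGroup_stabilizer_single (p : ℕ) [CharP R p] :
    IsPGroup p (stabilizer SL(2, R) (Pi.single 0 1 : Fin 2 → R)) := by
  rintro ⟨g, hg⟩
  obtain ⟨b, rfl⟩ := exists_eq_transvection_of_smul_single_eq hg
  exact ⟨1, Subtype.ext (by simp [transvection_pow])⟩

end Transvection

lemma not_ringChar_dvd_card_add_one (R : Type*) [NonAssocRing R] [Nontrivial R] [Finite R] :
    ¬ ringChar R ∣ Nat.card R + 1 := by
  have := Fintype.ofFinite R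
  simp [← ringChar.spec, Nat.card_eq_fintype_card]

section Field

variable {F : Type*} [Field F]

variable (F) in
/-- The point of projective space spanned by the `i`-th standard basis vector. -/
def coordinatePoint {ι : Type*} [DecidableEq ι] (i : ι) : ℙ F (ι → F) :=
  .mk F (Pi.single i 1) (by simp)

lemma exists_transvection_smul_coordinatePoint_eq {P : ℙ F (Fin 2 → F)}
    (hP : P ≠ coordinatePoint F (0 : Fin 2)) :
    ∃ b : F, transvection (zero_ne_one' (Fin 2)) b • coordinatePoint F (1 : Fin 2) = P := by
  induction P using Projectivization.ind with | _ w hw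
  have hw1 : w 1 ≠ 0 := fun hw1 ↦ by
    refine hP ((Projectivization.mk_eq_mk_iff' ..).2 ⟨w 0, ?_⟩)
    ext i
    fin_cases i <;> simp [hw1]
  refine ⟨w 0 / w 1, ?_⟩
  rw [coordinatePoint, Projectivization.smul_mk, Projectivization.mk_eq_mk_iff']
  refine ⟨(w 1)⁻¹, ?_⟩
  rw [transvection_smul_single_snd]
  ext i
  fin_cases i <;> simp [hw1, div_eq_inv_mul]

lemma compl_coordinatePoint_subset_orbit :
    {coordinatePoint F (0 : Fin 2)}ᶜ ⊆
      orbit (stabilizer SL(2, F) (Pi.single 0 1 : Fin 2 → F)) (coordinatePoint F (1 : Fin 2)) := by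
  intro P hP
  obtain ⟨b, rfl⟩ := exists_transvection_smul_coordinatePoint_eq hP
  exact ⟨⟨_, transvection_smul_single_fst (zero_ne_one' (Fin 2)) b⟩, rfl⟩

variable [Finite F]

lemma SL2_index_stabilizer_lt (v : Fin 2 → F) :
    (stabilizer SL(2, F) v).index < (Nat.card F + 1) ^ 2 :=
  calc (stabilizer SL(2, F) v).index
    _ ≤ Nat.card (Fin 2 → F) := index_stabilizer_le_card v
    _ = Nat.card F ^ 2 := by rw [Nat.card_fun, Nat.card_fin]
    _ < (Nat.card F + 1) ^ 2 := by gcongr; exact Nat.lt_succ_self _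

theorem SL2_exists_eq_stabilizer_of_index_eq {K : Subgroup SL(2, F)}
    (hK : K.index = Nat.card F + 1) : ∃ P : ℙ F (Fin 2 → F), K = stabilizer SL(2, F) P := by
  have : Fact (ringChar F).Prime := ⟨CharP.char_is_prime F _⟩
  have card_eq : Nat.card (ℙ F (Fin 2 → F)) = Nat.card F + 1 :=
    Projectivization.card_of_finrank_two F _ (Module.finrank_fin_fun F)
  have fixes_point : stabilizer SL(2, F) (Pi.single 0 1 : Fin 2 → F) ≤
      stabilizer SL(2, F) (coordinatePoint F (0 : Fin 2)) := stabilizer_le_stabilizer_mk _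
  refine exists_eq_stabilizer_of_index_eq_card (isPGroup_stabilizer_single (ringChar F))
    fixes_point compl_coordinatePoint_subset_orbit ?_ ?_ ?_ <;> rw [card_eq]
  · exact not_ringChar_dvd_card_add_one F
  · exact SL2_index_stabilizer_lt _
  · exact hK

theorem PSL2_exists_eq_stabilizer_of_index_eq {K : Subgroup PSL(2, F)}
    (hK : K.index = Nat.card F + 1) : ∃ P : ℙ F (Fin 2 → F), K = stabilizer PSL(2, F) P := by
  let π : SL(2, F) →* PSL(2, F) := QuotientGroup.mk' _
  have π_surjective : Function.Surjective π := QuotientGroup.mk'_surjective _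
  obtain ⟨P, hP⟩ :=
    SL2_exists_eq_stabilizer_of_index_eq ((K.index_comap_of_surjective π_surjective).trans hK)
  have comap_stabilizer : (stabilizer PSL(2, F) P).comap π = stabilizer SL(2, F) P := rfl
  exact ⟨P, Subgroup.comap_injective π_surjective (hP.trans comap_stabilizer.symm)⟩

theorem statement10_general {K L : Subgroup PSL(2, F)}
    (hK : K.index = Nat.card F + 1) (hL : L.index = Nat.card F + 1) :
    ∃ g, L = K.map (MulAut.conj g).toMonoidHom := by
  obtain ⟨P, rfl⟩ := PSL2_exists_eq_stabilizer_of_index_eq hK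
  obtain ⟨Q, rfl⟩ := PSL2_exists_eq_stabilizer_of_index_eq hL
  obtain ⟨g, rfl⟩ := exists_smul_eq PSL(2, F) P Q
  exact ⟨g, stabilizer_smul_eq_stabilizer_map_conj g P⟩

end Field

/-- For a prime power `q = p ^ k ≥ 4`, any two subgroups of index
`q + 1` in `PSL(2, 𝔽_q)` are conjugate. -/
theorem statement10 (p k : ℕ) [Fact p.Prime] (hk : 1 ≤ k)
    (q : ℕ) (hq : q = p ^ k) (hq4 : 4 ≤ q)
    (K L : Subgroup (Matrix.ProjectiveSpecialLinearGroup (Fin 2) (GaloisField p k)))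
    (hK : K.index = q + 1) (hL : L.index = q + 1) :
    ∃ g, L = K.map (MulAut.conj g).toMonoidHom := by
  rw [hq, ← GaloisField.card p k (by lia)] at hK hL
  exact statement10_general hK hL
end
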